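/- Let κ_{n,ℓ}(N) be the eigenvalues of the correlation operator of the N-particle Kac model. Then: (a) for every integer N ≥ 5 and all integers n, ℓ ≥ 0 with n + ℓ > 2, −1/(N−1) ≤ κ_{n,ℓ}(N) < κ_{0,2}(N) = 1/(N−1)²; (b) for N = 4 and all n, ℓ ≥ 0 with n + ℓ > 2, −1/3 ≤ κ_{n,ℓ}(4) < κ_{2,0}(4) = 23/243; (c) for N = 3 and all n, ℓ ≥ 0 with n + ℓ > 0 except (n,ℓ) = (1,1), −1/2 ≤ κ_{n,ℓ}(3) ≤ κ_{2,2}(3) = 13/40. -/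

import Mathlib

/-!
Divided by its value at `1`, the Jacobi polynomial of degree `n` is the hypergeometric polynomial
`hyp n a b t` with `t = (1 - x) / 2` (`kacKappa_eq`). Hence, up to the sign `(-1) ^ l`, the eigenvalue
is the function `radial n l a r = r ^ l * hyp n a (l + 1/2) (1 - r²)` at `r = 1 / (N - 1)` and
`a = (3N - 8) / 2`. The proof bounds it for all but finitely many `(n, l)` when `N = 3, 4`, and for
all `(n, l)` but one pair and one value when `N ≥ 5`; the remaining values are rational numbers
evaluated exactly (`three_finite`, `four_finite`, `kacKappa_five_three_zero`) or have a visible sign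
(`kacKappa_two_one_nonpos`). Three kinds of estimates are used.

* Sonine's monotonicity argument (`abs_hyp_le_one`) bounds the radial function by `r ^ l` times the
  value at the end point `t = 1`, an explicit product. This settles `N ≥ 5` unless both `l` and `n`
  are large.
* The energy of the differential equation in radial form is monotone (`energy_bound`), which bounds
  the radial function in the oscillatory region. This serves for small `l` and large `n` when
  `N = 3, 4`.
* For large `l` a bound with decay `(2l + 1) ^ (-1/2)` is needed. For `a = -1/2` the Jacobi
  polynomials are derivatives of the Chebyshev polynomials `U_m` (`chebV_eq_hyp`), and each of them is
  a term of the diagonal case of Gegenbauer's addition theorem, a sum of nonnegative terms equal to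
  `(m + 1)²` (`chebV_sq_le`). A fractional integral carries the bound to `a = 0` (`radial_zero`).

The contiguous relation `hyp_raise` raises `a` by one; as it divides by `2n + l + a + 5/2`, it turns
the bounds for `a = -1/2, 0`, which grow with `n`, into bounds for `a = 1/2, 1` that do not
(`radial_half`, `radial_one`). Iterating it reaches `a = (3N - 8) / 2` for every `N`
(`radial_iter`): the first three steps gain a factor of order `l ^ (-3)`, and the later ones lose
nothing.
-/

open scoped BigOperators

noncomputable section

/-- The generalized binomial coefficient `binom(r, k) = r(r-1)⋯(r-k+1)/k!`. -/
def genBinom (r : ℝ) (k : ℕ) : ℝ := (∏ i ∈ Finset.range k, (r - i)) / k.factorial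

/-- The Jacobi polynomial `P_n^{(α,β)}`, normalized (as by Rodrigues' formula)
so that `P_n^{(α,β)}(1) = binom(n+α, n)`. -/
def jacobiP (α β : ℝ) (n : ℕ) (x : ℝ) : ℝ :=
  2⁻¹ ^ n * ∑ s ∈ Finset.range (n + 1),
    genBinom ((n : ℝ) + α) (n - s) * genBinom ((n : ℝ) + β) s *
      (x - 1) ^ s * (x + 1) ^ (n - s)

/-- The eigenvalue `κ_{n,ℓ}(N)` of the correlation operator of the `N`-particle
Kac model:
`κ_{n,ℓ}(N) = [P_n^{(α,β)}(-1+2/(N-1)²)/P_n^{(α,β)}(1)]·(-1/(N-1))^ℓ`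
with `α = (3N-8)/2` and `β = ℓ + 1/2`. -/
def kacKappa (N n ℓ : ℕ) : ℝ :=
  jacobiP ((3 * (N : ℝ) - 8) / 2) ((ℓ : ℝ) + 1 / 2) n (-1 + 2 / ((N : ℝ) - 1) ^ 2) /
      jacobiP ((3 * (N : ℝ) - 8) / 2) ((ℓ : ℝ) + 1 / 2) n 1 *
    (-1 / ((N : ℝ) - 1)) ^ ℓ

/-! ### Hypergeometric polynomials -/

/-- Coefficients of the Gauss hypergeometric polynomial
`₂F₁(-n, n + a + b + 1; a + 1; t)`. -/
def hypCoef {K : Type*} [Field K] (n : ℕ) (a b : K) (k : ℕ) : K :=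
  ∏ i ∈ Finset.range k, (((i : K) - n) * (i + n + a + b + 1) / ((i + 1) * (i + a + 1)))

/-- The hypergeometric polynomial `₂F₁(-n, n + a + b + 1; a + 1; t)`, that is, the Jacobi
polynomial `P_n^{(a,b)}(1 - 2t)` divided by its value at `t = 0`. It is defined over any field so
that it can be evaluated exactly over `ℚ`. -/
def hyp {K : Type*} [Field K] (n : ℕ) (a b t : K) : K :=
  ∑ k ∈ Finset.range (n + 1), hypCoef n a b k * t ^ k

/-- `hyp` as a real polynomial in `t`. -/
def hypPoly (n : ℕ) (a b : ℝ) : Polynomial ℝ :=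
  ∑ k ∈ Finset.range (n + 1), Polynomial.C (hypCoef n a b k) * Polynomial.X ^ k

lemma hypCoef_zero {K : Type*} [Field K] (n : ℕ) (a b : K) : hypCoef n a b 0 = 1 := by
  simp [hypCoef]

lemma hypCoef_succ {K : Type*} [Field K] (n : ℕ) (a b : K) (k : ℕ) :
    hypCoef n a b (k + 1) =
      hypCoef n a b k * (((k : K) - n) * (k + n + a + b + 1) / ((k + 1) * (k + a + 1))) := by
  rw [hypCoef, Finset.prod_range_succ, ← hypCoef]

lemma hypCoef_eq_zero {K : Type*} [Field K] (n : ℕ) (a b : K) {k : ℕ} (h : n < k) :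
    hypCoef n a b k = 0 := by
  refine Finset.prod_eq_zero (Finset.mem_range.2 h) ?_
  simp

lemma coeff_hypPoly (n : ℕ) (a b : ℝ) (k : ℕ) : (hypPoly n a b).coeff k = hypCoef n a b k := by
  unfold hypPoly
  simp only [Polynomial.finsetSum_coeff, Polynomial.coeff_C_mul, Polynomial.coeff_X_pow]
  by_cases h : k < n + 1
  · rw [Finset.sum_eq_single k]
    · simp
    · intro j _ hj
      simp [Ne.symm hj]
    · intro h'
      simp at h'
      omega
  · rw [hypCoef_eq_zero n a b (by omega)]
    refine Finset.sum_eq_zero fun j hj => ?_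
    have := Finset.mem_range.1 hj
    rw [if_neg (by omega), mul_zero]

lemma eval_hypPoly (n : ℕ) (a b t : ℝ) : (hypPoly n a b).eval t = hyp n a b t := by
  simp [hypPoly, hyp, Polynomial.eval_finsetSum]

lemma hyp_zero_right (n : ℕ) (a b : ℝ) : hyp n a b 0 = 1 := by
  rw [← eval_hypPoly, ← Polynomial.coeff_zero_eq_eval_zero, coeff_hypPoly, hypCoef_zero]

lemma hyp_zero_left (a b t : ℝ) : hyp 0 a b t = 1 := by
  simp [hyp, hypCoef_zero]

/-- At rational parameters the real value can be computed in `ℚ`. -/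
lemma hyp_ratCast (n : ℕ) (a b t : ℚ) :
    hyp n (a : ℝ) (b : ℝ) (t : ℝ) = ((hyp n a b t : ℚ) : ℝ) := by
  simp [hyp, hypCoef]

lemma hypPoly_ode_poly (n : ℕ) {a : ℝ} (b : ℝ) (ha : -1 < a) :
    Polynomial.X * Polynomial.derivative (Polynomial.derivative (hypPoly n a b)) -
      Polynomial.X * (Polynomial.X *
        Polynomial.derivative (Polynomial.derivative (hypPoly n a b))) +
      (Polynomial.C (a + 1) * Polynomial.derivative (hypPoly n a b) -
        Polynomial.C (a + b + 2) * (Polynomial.X * Polynomial.derivative (hypPoly n a b))) +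
      Polynomial.C (n * (n + a + b + 1)) * hypPoly n a b = 0 := by
  have key : ∀ k : ℕ, hypCoef n a b (k + 1) * ((k + 1) * (k + a + 1)) =
      hypCoef n a b k * (((k : ℝ) - n) * (k + n + a + b + 1)) := by
    intro k
    have h1 : (k : ℝ) + 1 ≠ 0 := by positivity
    have h2 : (k : ℝ) + a + 1 ≠ 0 := by
      have : (0 : ℝ) ≤ k := k.cast_nonneg
      linarith
    rw [hypCoef_succ]
    field_simp
  ext k
  rcases k with _ | _ | k
  · have := key 0
    simp [Polynomial.coeff_derivative, coeff_hypPoly] at this ⊢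
    linear_combination this
  · have := key 1
    simp [Polynomial.coeff_derivative, coeff_hypPoly, -map_add, -map_mul] at this ⊢
    linear_combination this
  · have := key (k + 2)
    simp [Polynomial.coeff_derivative, coeff_hypPoly, -map_add, -map_mul] at this ⊢
    linear_combination this

/-- The hypergeometric (Jacobi) differential equation. -/
lemma hypPoly_ode (n : ℕ) {a : ℝ} (b t : ℝ) (ha : -1 < a) :
    t * (1 - t) * (hypPoly n a b).derivative.derivative.eval t +
      ((a + 1) - (a + b + 2) * t) * (hypPoly n a b).derivative.eval t +
      n * (n + a + b + 1) * hyp n a b t = 0 := by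
  have h := congrArg (Polynomial.eval t) (hypPoly_ode_poly n b ha)
  simp only [Polynomial.eval_add, Polynomial.eval_sub, Polynomial.eval_mul, Polynomial.eval_X,
    Polynomial.eval_C, Polynomial.eval_zero, eval_hypPoly] at h
  linear_combination h

/-- The coefficient identities behind `hyp_raise`. -/
lemma hypCoef_shift (n : ℕ) {a : ℝ} (b : ℝ) (ha : -1 < a) (k : ℕ) :
    hypCoef n a b (k + 1) * ((k + 1) * (a + 1)) =
        (k - n) * (n + a + b + 1) * hypCoef n (a + 1) b k ∧
    hypCoef (n + 1) a b (k + 1) * ((k + 1) * (a + 1)) =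
        -(n + 1) * (n + a + b + 2 + k) * hypCoef n (a + 1) b k := by
  have h0 : a + 1 ≠ 0 := by linarith
  induction k with
  | zero =>
    constructor <;>
    · simp [hypCoef]
      field_simp
      try ring
  | succ k ih =>
    have hk : (0 : ℝ) ≤ k := k.cast_nonneg
    have h1 : (k : ℝ) + 1 ≠ 0 := by positivity
    have h2 : (k : ℝ) + a + 1 ≠ 0 := by linarith
    have h3 : (k : ℝ) + (a + 1) + 1 ≠ 0 := by linarith
    have h5 : (k : ℝ) + 1 + a + 1 ≠ 0 := by linarith
    have h4 : (k : ℝ) + 1 + 1 ≠ 0 := by positivity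
    obtain ⟨i1, i2⟩ := ih
    constructor
    · rw [hypCoef_succ n a b (k + 1), hypCoef_succ n (a + 1) b k]
      have e : hypCoef n a b (k + 1) =
        (k - n) * (n + a + b + 1) * hypCoef n (a + 1) b k / ((k + 1) * (a + 1)) := by
        rw [← i1]; field_simp
      rw [e]
      push_cast
      field_simp
      ring
    · rw [hypCoef_succ (n + 1) a b (k + 1), hypCoef_succ n (a + 1) b k]
      have e : hypCoef (n + 1) a b (k + 1) =
        -(n + 1) * (n + a + b + 2 + k) * hypCoef n (a + 1) b k / ((k + 1) * (a + 1)) := by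
        rw [← i2]; field_simp
      rw [e]
      push_cast
      field_simp
      ring

/-- The contiguous relation raising the parameter `a`: the left side is the normalized Jacobi
polynomial for `a + 1`, the right side the difference of two consecutive ones for `a`. -/
lemma hyp_raise (n : ℕ) {a : ℝ} (b t : ℝ) (ha : -1 < a) :
    (2 * n + a + b + 2) * t * hyp n (a + 1) b t =
      (a + 1) * (hyp n a b t - hyp (n + 1) a b t) := by
  have h : Polynomial.C (2 * n + a + b + 2) * (Polynomial.X * hypPoly n (a + 1) b) =
      Polynomial.C (a + 1) * (hypPoly n a b - hypPoly (n + 1) a b) := by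
    ext k
    rcases k with _ | k
    · simp [coeff_hypPoly, hypCoef_zero]
    · obtain ⟨h1, h2⟩ := hypCoef_shift n b ha k
      simp only [Polynomial.coeff_C_mul, Polynomial.coeff_X_mul, coeff_hypPoly,
        Polynomial.coeff_sub]
      have h0 : (k : ℝ) + 1 ≠ 0 := by positivity
      apply mul_left_cancel₀ h0
      linear_combination h2 - h1
  have h := congrArg (Polynomial.eval t) h
  simp only [Polynomial.eval_sub, Polynomial.eval_mul, Polynomial.eval_X,
    Polynomial.eval_C, eval_hypPoly] at h
  linear_combination h

/-! ### The binary form and the Jacobi polynomials -/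

/-- Coefficients of the homogeneous form of the normalized Jacobi polynomial. -/
def homCoef (n : ℕ) (a b : ℝ) (j : ℕ) : ℝ :=
  (-1) ^ j * genBinom (n + b) j * n.factorial /
    ((n - j).factorial * ∏ i ∈ Finset.range j, (a + 1 + i))

/-- The binary form of degree `n` in `(s, t)` whose restriction to `s + t = 1` is the normalized
Jacobi polynomial of the variable `s - t`. -/
def hom (n : ℕ) (a b s t : ℝ) : ℝ :=
  ∑ j ∈ Finset.range (n + 1), homCoef n a b j * t ^ j * s ^ (n - j)

lemma genBinom_eq_choose (x : ℝ) (k : ℕ) : genBinom x k = Ring.choose x k := by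
  have h := Ring.descPochhammer_eq_factorial_smul_choose x k
  rw [genBinom]
  have hk : (k.factorial : ℝ) ≠ 0 := by positivity
  rw [div_eq_iff hk, mul_comm, ← nsmul_eq_mul, ← h, ← descPochhammer_eval_eq_prod_range,
    Polynomial.eval_eq_smeval]
  rw [← descPochhammer_map (Int.castRingHom ℝ), ← Polynomial.eval_eq_smeval,
    Polynomial.eval_map, ← Polynomial.aeval_eq_smeval]
  rfl

/-- The Chu–Vandermonde identity. -/
lemma genBinom_add (x y : ℝ) (k : ℕ) :
    genBinom (x + y) k = ∑ j ∈ Finset.range (k + 1), genBinom x j * genBinom y (k - j) := by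
  simp only [genBinom_eq_choose]
  rw [Ring.add_choose_eq k (Commute.all x y),
    Finset.Nat.sum_antidiagonal_eq_sum_range_succ (fun i j => Ring.choose x i * Ring.choose y j)]

lemma prod_shift_pos {a : ℝ} (ha : -1 < a) (j : ℕ) : 0 < ∏ i ∈ Finset.range j, (a + 1 + i) :=
  Finset.prod_pos fun i _ => by
    have : (0 : ℝ) ≤ i := i.cast_nonneg
    linarith

/-- `binom (a + k) (k - j)` is a quotient of rising factorials. -/
lemma genBinom_top {a : ℝ} (ha : -1 < a) {j k : ℕ} (h : j ≤ k) :
    genBinom (k + a) (k - j) =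
      (∏ i ∈ Finset.range k, (a + 1 + i)) /
        ((∏ i ∈ Finset.range j, (a + 1 + i)) * (k - j).factorial) := by
  have hj := (prod_shift_pos ha j).ne'
  obtain ⟨m, rfl⟩ := Nat.exists_eq_add_of_le h
  have e : ∏ i ∈ Finset.range m, (((j + m : ℕ) : ℝ) + a - i) =
      ∏ i ∈ Finset.range m, (a + 1 + ((j + i : ℕ) : ℝ)) := by
    rw [← Finset.prod_range_reflect]
    refine Finset.prod_congr rfl fun i hi => ?_
    have := Finset.mem_range.1 hi
    rw [Nat.sub_sub, Nat.cast_sub (by omega)]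
    push_cast
    ring
  rw [genBinom, Nat.add_sub_cancel_left, e, Finset.prod_range_add]
  field_simp

lemma prod_sub_eq (n k : ℕ) (h : k ≤ n) :
    ∏ i ∈ Finset.range k, ((i : ℝ) - n) = (-1) ^ k * n.factorial / (n - k).factorial := by
  induction k with
  | zero =>
    have : (n.factorial : ℝ) ≠ 0 := by positivity
    simp [this]
  | succ k ih =>
    rw [Finset.prod_range_succ, ih (by omega)]
    have e : n - k = (n - (k + 1)) + 1 := by omega
    have h1 : ((n - (k + 1)).factorial : ℝ) ≠ 0 := by positivity
    have h2 : ((n - (k + 1) : ℕ) : ℝ) + 1 ≠ 0 := by positivity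
    rw [e, Nat.factorial_succ]
    have h3 : ((n - (k + 1) : ℕ) : ℝ) = n - (k + 1) := by
      rw [Nat.cast_sub h]; push_cast; ring
    push_cast
    rw [h3] at h2 ⊢
    field_simp
    ring

lemma hypCoef_eq (a b : ℝ) {n k : ℕ} (h : k ≤ n) :
    hypCoef n a b k = (-1) ^ k * n.factorial /
      ((n - k).factorial * ∏ i ∈ Finset.range k, (a + 1 + i)) *
        genBinom ((n + b) + (k + a)) k := by
  have e1 : ∏ i ∈ Finset.range k, ((i : ℝ) + n + a + b + 1) =
      ∏ i ∈ Finset.range k, ((n : ℝ) + b + (k + a) - i) := by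
    rw [← Finset.prod_range_reflect]
    refine Finset.prod_congr rfl fun i hi => ?_
    have := Finset.mem_range.1 hi
    rw [Nat.sub_sub, Nat.cast_sub (by omega)]
    push_cast
    ring
  have e2 : ∏ i ∈ Finset.range k, ((i : ℝ) + 1) = k.factorial := by
    rw [← Finset.prod_range_add_one_eq_factorial]; push_cast; rfl
  have e3 : ∏ i ∈ Finset.range k, ((i : ℝ) + a + 1) = ∏ i ∈ Finset.range k, (a + 1 + i) :=
    Finset.prod_congr rfl fun i _ => by ring
  rw [hypCoef, Finset.prod_div_distrib, Finset.prod_mul_distrib, Finset.prod_mul_distrib,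
    prod_sub_eq n k h, e1, e2, e3, genBinom]
  field_simp

/-- On `s + t = 1` the homogeneous form is the hypergeometric polynomial; comparing coefficients
of `t ^ k` this is the Chu–Vandermonde identity. -/
lemma hom_eq_hyp (n : ℕ) {a : ℝ} (b t : ℝ) (ha : -1 < a) :
    hom n a b (1 - t) t = hyp n a b t := by
  have expand : ∀ j ∈ Finset.range (n + 1), homCoef n a b j * t ^ j * (1 - t) ^ (n - j) =
      ∑ k ∈ Finset.Icc j n,
        homCoef n a b j * ((-1) ^ (k - j) * (n - j).choose (k - j)) * t ^ k := by
    intro j hj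
    have hj' : j ≤ n := by have := Finset.mem_range.1 hj; omega
    rw [sub_eq_add_neg, add_comm, add_pow, Finset.mul_sum]
    rw [show Finset.Icc j n = Finset.Ico j (n + 1) from rfl, Finset.sum_Ico_eq_sum_range,
      Nat.sub_add_comm hj']
    refine Finset.sum_congr rfl fun i _ => ?_
    rw [Nat.add_sub_cancel_left, neg_pow, pow_add, one_pow]
    ring
  rw [hom, Finset.sum_congr rfl expand, hyp]
  rw [Finset.sum_comm' (s' := fun k => Finset.range (k + 1)) (t' := Finset.range (n + 1))
    (by intro x y; simp only [Finset.mem_range, Finset.mem_Icc]; omega)]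
  refine Finset.sum_congr rfl fun k hk => ?_
  have hk' : k ≤ n := by have := Finset.mem_range.1 hk; omega
  rw [hypCoef_eq a b hk', genBinom_add, Finset.mul_sum, Finset.sum_mul]
  refine Finset.sum_congr rfl fun j hj => ?_
  have hj' : j ≤ k := by have := Finset.mem_range.1 hj; omega
  rw [genBinom_top ha hj', homCoef]
  have h1 := (prod_shift_pos ha j).ne'
  have h2 := (prod_shift_pos ha k).ne'
  have h3 : ((n - j).choose (k - j) : ℝ) =
      (n - j).factorial / ((k - j).factorial * (n - k).factorial) := by
    rw [Nat.cast_choose ℝ (by omega), show n - j - (k - j) = n - k by omega]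
  have h4 : (-1 : ℝ) ^ k = (-1) ^ j * (-1) ^ (k - j) := by
    rw [← pow_add]; congr 1; omega
  rw [h3, h4]
  field_simp

lemma genBinom_self_pos {a : ℝ} (ha : -1 < a) (n : ℕ) : 0 < genBinom (n + a) n := by
  have h := genBinom_top ha (Nat.zero_le n)
  rw [Nat.sub_zero] at h
  rw [h]
  have := prod_shift_pos ha n
  simp only [Finset.range_zero, Finset.prod_empty, one_mul]
  positivity

lemma jacobiP_eq_hom (n : ℕ) {a : ℝ} (b x : ℝ) (ha : -1 < a) :
    jacobiP a b n x = genBinom (n + a) n * hom n a b ((1 + x) / 2) ((1 - x) / 2) := by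
  rw [jacobiP, hom, Finset.mul_sum, Finset.mul_sum]
  refine Finset.sum_congr rfl fun j hj => ?_
  have hj' : j ≤ n := by have := Finset.mem_range.1 hj; omega
  have h := genBinom_top ha (Nat.zero_le n)
  rw [Nat.sub_zero] at h
  rw [h, genBinom_top ha hj', homCoef]
  have h1 := (prod_shift_pos ha j).ne'
  have h2 := (prod_shift_pos ha n).ne'
  have e1 : ((1 - x) / 2) ^ j = (-1) ^ j * (x - 1) ^ j * 2⁻¹ ^ j := by
    rw [← mul_pow, ← mul_pow]; congr 1; ring
  have e2 : ((1 + x) / 2) ^ (n - j) = (x + 1) ^ (n - j) * 2⁻¹ ^ (n - j) := by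
    rw [← mul_pow]; congr 1; ring
  have e3 : (2⁻¹ : ℝ) ^ n = 2⁻¹ ^ j * 2⁻¹ ^ (n - j) := by
    rw [← pow_add]; congr 1; omega
  have e4 : (-1 : ℝ) ^ j * (-1) ^ j = 1 := by rw [← mul_pow]; simp
  have hn : (n.factorial : ℝ) ≠ 0 := by positivity
  rw [e1, e2, e3]
  simp only [Finset.range_zero, Finset.prod_empty, one_mul]
  field_simp
  linear_combination (-(x - 1) ^ j * genBinom (n + b) j * (x + 1) ^ (n - j)) * e4

lemma jacobiP_ratio (n : ℕ) {a : ℝ} (b x : ℝ) (ha : -1 < a) :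
    jacobiP a b n x / jacobiP a b n 1 = hyp n a b ((1 - x) / 2) := by
  rw [jacobiP_eq_hom n b x ha, jacobiP_eq_hom n b 1 ha]
  have e1 : (1 + x) / 2 = 1 - (1 - x) / 2 := by ring
  have e2 : ((1 : ℝ) + 1) / 2 = 1 - (1 - 1) / 2 := by ring
  rw [e1, e2, hom_eq_hyp n b _ ha, hom_eq_hyp n b _ ha, sub_self, zero_div, hyp_zero_right,
    mul_one, mul_div_cancel_left₀ _ (genBinom_self_pos ha n).ne']

lemma kacKappa_eq (N n l : ℕ) (hN : 3 ≤ N) :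
    kacKappa N n l = hyp n ((3 * (N : ℝ) - 8) / 2) ((l : ℝ) + 1 / 2) (1 - 1 / ((N : ℝ) - 1) ^ 2) *
      (-1 / ((N : ℝ) - 1)) ^ l := by
  have : (3 : ℝ) ≤ N := by exact_mod_cast hN
  rw [kacKappa, jacobiP_ratio n _ _ (by linarith)]
  congr 2
  ring

/-! ### Sonine's bound -/

lemma hyp_one (n : ℕ) {a b : ℝ} (ha : -1 < a) (hb : -1 < b) :
    hyp n a b 1 = (-1) ^ n * ∏ i ∈ Finset.range n, ((b + 1 + i) / (a + 1 + i)) := by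
  have h := hom_eq_hyp n b 1 ha
  have hg := genBinom_top hb (Nat.zero_le n)
  rw [Nat.sub_zero] at hg
  rw [← h, hom, Finset.sum_eq_single n, homCoef, hg, Finset.prod_div_distrib]
  · have h1 := (prod_shift_pos ha n).ne'
    have hn : (n.factorial : ℝ) ≠ 0 := by positivity
    simp
    field_simp
  · intro j hj hjn
    have := Finset.mem_range.1 hj
    rw [sub_self, zero_pow (by omega), mul_zero]
  · simp

lemma abs_hyp_one (n : ℕ) {a b : ℝ} (ha : -1 < a) (hb : -1 < b) :
    |hyp n a b 1| = ∏ i ∈ Finset.range n, ((b + 1 + i) / (a + 1 + i)) := by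
  rw [hyp_one n ha hb, abs_mul, abs_pow, abs_neg, abs_one, one_pow, one_mul, abs_of_nonneg]
  refine Finset.prod_nonneg fun i _ => ?_
  have : (0 : ℝ) ≤ i := i.cast_nonneg
  exact div_nonneg (by linarith) (by linarith)

lemma hasDerivAt_hyp (n : ℕ) (a b t : ℝ) :
    HasDerivAt (hyp n a b) ((hypPoly n a b).derivative.eval t) t := by
  have h := (hypPoly n a b).hasDerivAt t
  exact h.congr_of_eventuallyEq (.of_forall fun x => (eval_hypPoly n a b x).symm)

/-- Sonine's theorem: with `y = hyp n a b` and `Λ = n (n + a + b + 1)` the quantity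
`Λ y² + t (1 - t) y'²` is nondecreasing to the right of `(2a + 1) / (2 (a + b + 1))`, so that there `|y|`
is at most its value at the end point `1`. -/
lemma abs_hyp_le_one (n : ℕ) {a b t : ℝ} (ha : -1 < a) (hab : 0 < a + b + 1)
    (ht0 : 0 ≤ t) (ht1 : t ≤ 1) (ht : 2 * a + 1 ≤ 2 * (a + b + 1) * t) :
    |hyp n a b t| ≤ |hyp n a b 1| := by
  rcases Nat.eq_zero_or_pos n with rfl | hn
  · simp [hyp_zero_left]
  have hn' : (0 : ℝ) < n := by exact_mod_cast hn
  set y' : ℝ → ℝ := fun x => (hypPoly n a b).derivative.eval x with hy'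
  set y'' : ℝ → ℝ := fun x => (hypPoly n a b).derivative.derivative.eval x with hy''
  set E : ℝ → ℝ := fun x => n * (n + a + b + 1) * hyp n a b x ^ 2 + x * (1 - x) * y' x ^ 2 with hE
  have hD : ∀ x, HasDerivAt E (y' x ^ 2 * (2 * (a + b + 1) * x - (2 * a + 1))) x := by
    intro x
    have d1 : HasDerivAt (hyp n a b) (y' x) x := hasDerivAt_hyp n a b x
    have d2 : HasDerivAt y' (y'' x) x := (hypPoly n a b).derivative.hasDerivAt x
    have d3 := ((hasDerivAt_id x).mul ((hasDerivAt_id x).const_sub 1)).mul (d2.pow 2)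
    have d4 := ((d1.pow 2).const_mul ((n : ℝ) * (n + a + b + 1))).add d3
    refine d4.congr_deriv ?_
    have ode := hypPoly_ode n b x ha
    simp only [id, Pi.mul_apply, Pi.pow_apply]
    push_cast
    linear_combination (2 * y' x) * ode
  have hmono : MonotoneOn E (Set.Icc t 1) := by
    apply monotoneOn_of_deriv_nonneg (convex_Icc t 1)
    · exact fun x _ => (hD x).continuousAt.continuousWithinAt
    · exact fun x _ => (hD x).differentiableAt.differentiableWithinAt
    · intro x hx
      rw [interior_Icc] at hx
      rw [(hD x).deriv]
      have := hx.1
      refine mul_nonneg (sq_nonneg _) ?_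
      nlinarith
  have h := hmono ⟨le_rfl, ht1⟩ ⟨ht1, le_rfl⟩ ht1
  have hL : 0 < n * (n + a + b + 1) := mul_pos hn' (by linarith)
  have h2 : 0 ≤ t * (1 - t) * y' t ^ 2 := by
    have : 0 ≤ 1 - t := by linarith
    positivity
  simp only [hE, sub_self, mul_zero, zero_mul, add_zero] at h
  refine sq_le_sq.1 ?_
  exact le_of_mul_le_mul_left (by linarith) hL

/-! ### The energy inequality -/

/-- The substitution `t = cos² θ` turns the Jacobi equation with `b = l + 1/2` into a
radial Schrödinger equation; with `s = 1 - t`, `C = (d + 1)(d + 2a + 2)` and `d = 2n + l` its energy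
`s ^ l (t (2 s y' - (l + 1) y)² + (C s - l (l + 1)) y²)`, where `y = hyp n a b`, is nonincreasing
on `[0, 1]`. Comparison with `t = 0` bounds `y` in the oscillatory region `C s > l (l + 1)`. -/
lemma energy_bound (n l : ℕ) {a t : ℝ} (ha : -1 / 2 ≤ a) (ht0 : 0 ≤ t) (ht1 : t ≤ 1) :
    (1 - t) ^ l * (((2 * n + l + 1) * (2 * n + l + 2 * a + 2)) * (1 - t) - l * (l + 1)) *
        hyp n a (l + 1 / 2) t ^ 2 ≤
      (2 * n + l + 1) * (2 * n + l + 2 * a + 2) - l * (l + 1) := by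
  set b : ℝ := l + 1 / 2 with hb
  set C : ℝ := (2 * n + l + 1) * (2 * n + l + 2 * a + 2) with hC
  set y : ℝ → ℝ := hyp n a b with hy
  set y' : ℝ → ℝ := fun x => (hypPoly n a b).derivative.eval x with hy'
  set y'' : ℝ → ℝ := fun x => (hypPoly n a b).derivative.derivative.eval x with hy''
  set E : ℝ → ℝ := fun x => (1 - x) ^ l * (x * (2 * ((1 - x) * y' x) - (l + 1) * y x) ^ 2 +
    (C * (1 - x) - l * (l + 1)) * y x ^ 2) with hE
  have hD : ∀ x, HasDerivAt E (-(2 * a + 1) * (1 - x) ^ l *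
      (2 * ((1 - x) * y' x) - (l + 1) * y x) ^ 2 -
        (l + 1) * (l * (1 - x) ^ (l - 1)) * y x ^ 2) x := by
    intro x
    have d1 : HasDerivAt y (y' x) x := hasDerivAt_hyp n a b x
    have d2 : HasDerivAt y' (y'' x) x := (hypPoly n a b).derivative.hasDerivAt x
    have d0 : HasDerivAt (fun x : ℝ => 1 - x) (-1) x := (hasDerivAt_id x).const_sub 1
    have d3 := ((d0.mul d2).const_mul 2).sub (d1.const_mul ((l : ℝ) + 1))
    have d4 := ((hasDerivAt_id x).mul (d3.pow 2)).add
      (((d0.const_mul C).sub_const ((l : ℝ) * (l + 1))).mul (d1.pow 2))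
    refine ((d0.pow l).mul d4).congr_deriv ?_
    have ode := hypPoly_ode n b x (by linarith : -1 < a)
    have hp : (1 - x) * (l * (1 - x) ^ (l - 1)) = l * (1 - x) ^ l := by
      rcases l with _ | l
      · simp
      · rw [Nat.add_sub_cancel, pow_succ]; ring
    simp only [id, Pi.mul_apply, Pi.pow_apply, Pi.sub_apply, Pi.add_apply]
    generalize (l : ℝ) * (1 - x) ^ (l - 1) = q at hp ⊢
    generalize (1 - x) ^ l = p at hp ⊢
    simp only [hC]
    rw [hb] at ode
    have e1 : y x = hyp n a (l + 1 / 2) x := rfl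
    have e2 : y' x = (hypPoly n a (l + 1 / 2)).derivative.eval x := rfl
    have e3 : y'' x = (hypPoly n a (l + 1 / 2)).derivative.derivative.eval x := rfl
    rw [← e1, ← e2, ← e3] at ode
    push_cast
    linear_combination (4 * p * (2 * ((1 - x) * y' x) - (l + 1) * y x)) * ode +
      (-(4 * (1 - x) * y' x ^ 2 - 4 * (l + 1) * y' x * y x) +
        (2 * ((1 - x) * y' x) - (l + 1) * y x) ^ 2 -
        (2 * n + l + 1) * (2 * n + l + 2 * a + 2) * y x ^ 2) * hp
  have hanti : AntitoneOn E (Set.Icc 0 1) := by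
    apply antitoneOn_of_deriv_nonpos (convex_Icc 0 1)
    · exact fun x _ => (hD x).continuousAt.continuousWithinAt
    · exact fun x _ => (hD x).differentiableAt.differentiableWithinAt
    · intro x hx
      rw [interior_Icc] at hx
      rw [(hD x).deriv]
      have h1 : 0 ≤ 1 - x := by linarith [hx.2]
      have h2 : 0 ≤ 2 * a + 1 := by linarith
      have h3 : 0 ≤ (2 * a + 1) * (1 - x) ^ l * (2 * ((1 - x) * y' x) - (l + 1) * y x) ^ 2 := by
        positivity
      have h4 : 0 ≤ ((l : ℝ) + 1) * (l * (1 - x) ^ (l - 1)) * y x ^ 2 := by positivity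
      linarith
  have h := hanti ⟨le_rfl, zero_le_one⟩ ⟨ht0, ht1⟩ ht0
  have h0 : y 0 = 1 := hyp_zero_right n a b
  simp only [hE, h0, sub_zero, one_pow, zero_mul, zero_add, mul_one, one_mul] at h
  have h1 : 0 ≤ 1 - t := by linarith
  have h2 : 0 ≤ (1 - t) ^ l * (t * (2 * ((1 - t) * y' t) - (l + 1) * y t) ^ 2) := by positivity
  linarith

/-! ### Derivatives of Chebyshev polynomials and the case `a = -1/2` -/

/-- The `k`-th derivative of the Chebyshev polynomial `U_m`, evaluated at `x`; up to a factor it is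
the Gegenbauer polynomial of index `k + 1` and degree `m - k`. -/
def chebV (m k : ℕ) (x : ℝ) : ℝ :=
  (Polynomial.derivative^[k] (Polynomial.Chebyshev.U ℝ (m : ℤ))).eval x

/-- The normalizing constants `∏_{j = 1}^{k} ((m + 1)² - j²)`. -/
def chebPi (m k : ℕ) : ℝ := ∏ j ∈ Finset.range k, (((m : ℝ) + 1) ^ 2 - ((j : ℝ) + 1) ^ 2)

lemma chebPi_succ (m k : ℕ) :
    chebPi m (k + 1) = chebPi m k * (((m : ℝ) + 1) ^ 2 - ((k : ℝ) + 1) ^ 2) := by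
  rw [chebPi, Finset.prod_range_succ, ← chebPi]

lemma chebPi_factor_pos {m k : ℕ} (h : k < m) : 0 < ((m : ℝ) + 1) ^ 2 - ((k : ℝ) + 1) ^ 2 := by
  have : (k : ℝ) < m := by exact_mod_cast h
  have : (0 : ℝ) ≤ k := k.cast_nonneg
  nlinarith

lemma chebPi_pos {m k : ℕ} (h : k ≤ m) : 0 < chebPi m k :=
  Finset.prod_pos fun j hj => chebPi_factor_pos (by have := Finset.mem_range.1 hj; omega)

/-- The Gegenbauer differential equation. -/
lemma chebV_ode (m k : ℕ) (x : ℝ) :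
    (1 - x ^ 2) * chebV m (k + 2) x = (2 * k + 3) * x * chebV m (k + 1) x -
      (((m : ℝ) + 1) ^ 2 - ((k : ℝ) + 1) ^ 2) * chebV m k x := by
  have := Polynomial.Chebyshev.one_sub_X_sq_mul_iterate_derivative_U_eval (R := ℝ) m k x
  simp only [Int.cast_natCast] at this
  exact this

lemma chebV_top (m : ℕ) (x : ℝ) : chebV m (m + 1) x = 0 := by
  rw [chebV, Polynomial.iterate_derivative_eq_zero, Polynomial.eval_zero]
  rw [Polynomial.Chebyshev.natDegree_U_natCast]
  omega

lemma hasDerivAt_chebV (m k : ℕ) (x : ℝ) : HasDerivAt (chebV m k) (chebV m (k + 1) x) x := by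
  have := (Polynomial.derivative^[k] (Polynomial.Chebyshev.U ℝ (m : ℤ))).hasDerivAt x
  rwa [← Function.iterate_succ_apply' Polynomial.derivative] at this

/-- The derivatives of the partial sums in Gegenbauer's addition theorem telescope. -/
lemma hasDerivAt_chebV_sum (m K : ℕ) (h : K ≤ m) (x : ℝ) :
    HasDerivAt (fun x => ∑ k ∈ Finset.range (K + 1),
        (2 * k + 1) * (1 - x ^ 2) ^ k * chebV m k x ^ 2 / chebPi m k)
      (2 * (K + 1) * (1 - x ^ 2) ^ K * chebV m (K + 1) x * chebV m K x / chebPi m K) x := by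
  have d0 : HasDerivAt (fun x : ℝ => 1 - x ^ 2) (-(2 * x)) x := by
    have := ((hasDerivAt_id x).pow 2).const_sub 1
    simpa using this
  have term : ∀ k : ℕ, HasDerivAt
      (fun x => (2 * k + 1) * (1 - x ^ 2) ^ k * chebV m k x ^ 2 / chebPi m k)
      ((2 * k + 1) * (k * (1 - x ^ 2) ^ (k - 1) * (-(2 * x)) * chebV m k x ^ 2 +
        (1 - x ^ 2) ^ k * (2 * chebV m k x * chebV m (k + 1) x)) / chebPi m k) x := by
    intro k
    have d1 := (((d0.pow k).const_mul (2 * (k : ℝ) + 1)).mul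
      ((hasDerivAt_chebV m k x).pow 2)).div_const (chebPi m k)
    refine d1.congr_deriv ?_
    simp only [Pi.pow_apply]
    push_cast
    ring
  induction K with
  | zero =>
    have := term 0
    simp only [zero_add, Finset.sum_range_one]
    refine this.congr_deriv ?_
    simp
    ring
  | succ K ih =>
    have d := (ih (by omega)).add (term (K + 1))
    have e : (fun x => ∑ k ∈ Finset.range (K + 1 + 1),
        (2 * k + 1) * (1 - x ^ 2) ^ k * chebV m k x ^ 2 / chebPi m k) =
        (fun x => ∑ k ∈ Finset.range (K + 1),
          (2 * k + 1) * (1 - x ^ 2) ^ k * chebV m k x ^ 2 / chebPi m k) +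
        (fun x => (2 * ((K + 1 : ℕ) : ℝ) + 1) * (1 - x ^ 2) ^ (K + 1) * chebV m (K + 1) x ^ 2 /
          chebPi m (K + 1)) := by
      funext y
      rw [Finset.sum_range_succ]
      rfl
    rw [e]
    refine d.congr_deriv ?_
    have h1 := (chebPi_factor_pos (show K < m by omega)).ne'
    have h2 := (chebPi_pos (show K ≤ m by omega)).ne'
    have ode := chebV_ode m K x
    rw [chebPi_succ, Nat.add_sub_cancel]
    push_cast
    field_simp
    linear_combination
      (((K : ℝ) + 1) * (1 - x ^ 2) ^ K * chebV m (K + 1) x) * ode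

/-- One term of Gegenbauer's addition theorem for `U_m` on the diagonal: the sum
`∑ k, (2k + 1) (1 - x²) ^ k V_k(x)² / chebPi m k` over `k ≤ m` is independent of `x`, because its
derivative telescopes, and at `x = 1` it equals `(m + 1)²`. -/
lemma chebV_sq_le (m l : ℕ) (h : l ≤ m) {x : ℝ} (hx : x ^ 2 ≤ 1) :
    (2 * l + 1) * (1 - x ^ 2) ^ l * chebV m l x ^ 2 / chebPi m l ≤ ((m : ℝ) + 1) ^ 2 := by
  set S : ℝ → ℝ := fun x => ∑ k ∈ Finset.range (m + 1),
        (2 * k + 1) * (1 - x ^ 2) ^ k * chebV m k x ^ 2 / chebPi m k with hS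
  have hd : ∀ x, HasDerivAt S 0 x := fun x => by
    have := hasDerivAt_chebV_sum m m le_rfl x
    rwa [chebV_top, mul_zero, zero_mul, zero_div] at this
  have hc : S x = S 1 := is_const_of_deriv_eq_zero (fun x => (hd x).differentiableAt)
    (fun x => (hd x).deriv) x 1
  have h1 : S 1 = ((m : ℝ) + 1) ^ 2 := by
    rw [hS]
    simp only [one_pow, sub_self]
    rw [Finset.sum_eq_single 0]
    · simp [chebV, chebPi, Polynomial.Chebyshev.U_eval_one]
    · intro k _ hk
      rw [zero_pow hk, mul_zero, zero_mul, zero_div]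
    · simp
  rw [← h1, ← hc]
  refine Finset.single_le_sum (f := fun k : ℕ =>
    (2 * (k : ℝ) + 1) * (1 - x ^ 2) ^ k * chebV m k x ^ 2 / chebPi m k) (fun k hk => ?_)
    (Finset.mem_range.2 (by omega))
  have h2 := chebPi_pos (show k ≤ m by have := Finset.mem_range.1 hk; omega)
  have h3 : 0 ≤ 1 - x ^ 2 := by linarith
  positivity

/-- The differential equation at the origin. -/
lemma chebV_zero_step (m k : ℕ) :
    chebV m (k + 2) 0 = -(((m : ℝ) + 1) ^ 2 - ((k : ℝ) + 1) ^ 2) * chebV m k 0 := by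
  have := chebV_ode m k 0
  linear_combination this

lemma chebV_zero_parity (m k : ℕ) (h : Even (m + k)) : chebV m (k + 1) 0 = 0 := by
  induction k using Nat.twoStepInduction with
  | zero =>
    have h1 := congrArg (Polynomial.eval 0)
      (Polynomial.Chebyshev.add_one_mul_T_eq_poly_in_U (R := ℝ) m)
    have h2 : Odd ((m : ℤ) + 1) := by
      have : Even (m : ℤ) := by simpa using h
      exact this.add_one
    simp [Polynomial.Chebyshev.T_eval_zero_of_odd ℝ h2] at h1
    simpa [chebV] using h1
  | one =>
    have h2 : Odd (m : ℤ) := by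
      rw [Nat.even_add_one, Nat.not_even_iff_odd] at h
      exact_mod_cast h
    rw [chebV_zero_step]
    simp [chebV, Polynomial.Chebyshev.U_eval_zero_of_odd ℝ h2]
  | more k ih1 ih2 =>
    have : Even (m + k) := by
      rw [← add_assoc, Nat.even_add] at h
      simpa using h
    rw [chebV_zero_step, ih1 this, mul_zero]

/-- At the origin the recursion `chebV_zero_step` has only one of the two kinds of factors of
`chebPi`, and it is the larger one. -/
lemma chebPi_le_chebV_sq (m k : ℕ) (h : Even (m + k)) (hk : k ≤ m) :
    chebPi m k ≤ chebV m k 0 ^ 2 := by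
  induction k using Nat.twoStepInduction with
  | zero =>
    have h1 : Even (m : ℤ) := by simpa using h
    have h2 : chebV m 0 0 ^ 2 = 1 := by
      simp only [chebV, Function.iterate_zero, id, Polynomial.Chebyshev.U_eval_zero_of_even ℝ h1]
      rcases Int.units_eq_one_or ((m : ℤ) / 2).negOnePow with h | h <;> simp [h]
    rw [h2]
    simp [chebPi]
  | one =>
    have h1 := congrArg (Polynomial.eval 0)
      (Polynomial.Chebyshev.add_one_mul_T_eq_poly_in_U (R := ℝ) m)
    have h2 : Even ((m : ℤ) + 1) := by exact_mod_cast h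
    have h3 : (Polynomial.eval 0 (Polynomial.Chebyshev.T ℝ ((m : ℤ) + 1))) ^ 2 = 1 := by
      rw [Polynomial.Chebyshev.T_eval_zero_of_even ℝ h2]
      rcases Int.units_eq_one_or (((m : ℤ) + 1) / 2).negOnePow with h | h <;> simp [h]
    have h4 : chebV m 1 0 ^ 2 = ((m : ℝ) + 1) ^ 2 := by
      simp at h1
      have : chebV m 1 0 = -((m + 1) * Polynomial.eval 0 (Polynomial.Chebyshev.T ℝ ((m : ℤ) + 1))) :=
        by simp [chebV, h1]
      rw [this]
      linear_combination ((m : ℝ) + 1) ^ 2 * h3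
    rw [h4]
    simp [chebPi]
  | more k ih1 ih2 =>
    have h1 : Even (m + k) := by
      rw [← add_assoc, Nat.even_add] at h
      simpa using h
    have i := ih1 h1 (by omega)
    have p1 := chebPi_factor_pos (show k < m by omega)
    have p2 := chebPi_factor_pos (show k + 1 < m by omega)
    have p3 := chebPi_pos (show k ≤ m by omega)
    have hle : ((m : ℝ) + 1) ^ 2 - (((k + 1 : ℕ) : ℝ) + 1) ^ 2 ≤
        ((m : ℝ) + 1) ^ 2 - ((k : ℝ) + 1) ^ 2 := by
      push_cast
      have : (0 : ℝ) ≤ k := k.cast_nonneg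
      nlinarith
    rw [chebV_zero_step, chebPi_succ, chebPi_succ, mul_pow, neg_sq]
    calc _ ≤ chebV m k 0 ^ 2 * (((m : ℝ) + 1) ^ 2 - ((k : ℝ) + 1) ^ 2) *
          (((m : ℝ) + 1) ^ 2 - ((k : ℝ) + 1) ^ 2) := by gcongr
      _ = _ := by ring

lemma coeff_iterate_derivative_U (m l k : ℕ) :
    (k.factorial : ℝ) * (Polynomial.derivative^[l] (Polynomial.Chebyshev.U ℝ (m : ℤ))).coeff k =
      chebV m (l + k) 0 := by
  have h := Polynomial.coeff_iterate_derivative (k := k)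
    (Polynomial.derivative^[l] (Polynomial.Chebyshev.U ℝ (m : ℤ))) 0
  rw [← Function.iterate_add_apply, Polynomial.coeff_zero_eq_eval_zero, zero_add,
    Nat.descFactorial_self, nsmul_eq_mul] at h
  rw [← h, chebV, add_comm l k]

/-- The derivatives of the Chebyshev polynomials `U` are the Jacobi polynomials with
`a = -1/2`. -/
lemma chebV_eq_hyp (n l : ℕ) (x : ℝ) :
    chebV (2 * n + l) l x = chebV (2 * n + l) l 0 * hyp n (-1 / 2) ((l : ℝ) + 1 / 2) (x ^ 2) := by
  set m := 2 * n + l with hm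
  have hpar : Even (m + l) := ⟨n + l, by omega⟩
  have he : ∀ k : ℕ, ((2 * k).factorial : ℝ) * hypCoef n (-1 / 2) ((l : ℝ) + 1 / 2) k * chebV m l 0 =
      chebV m (l + 2 * k) 0 := by
    intro k
    induction k with
    | zero => simp [hypCoef_zero]
    | succ k ih =>
      rw [show l + 2 * (k + 1) = l + 2 * k + 2 by ring, chebV_zero_step, ← ih, hypCoef_succ,
        show 2 * (k + 1) = 2 * k + 1 + 1 by ring, Nat.factorial_succ, Nat.factorial_succ, hm]
      have h1 : (k : ℝ) + 1 ≠ 0 := by positivity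
      have h2 : 2 * (k : ℝ) + 1 ≠ 0 := by positivity
      have h3 : (k : ℝ) + -1 / 2 + 1 = (2 * k + 1) / 2 := by ring
      rw [h3]
      push_cast
      field_simp
      ring
  have ho : ∀ k : ℕ, chebV m (l + (2 * k + 1)) 0 = 0 := by
    intro k
    rw [← add_assoc]
    refine chebV_zero_parity m (l + 2 * k) ?_
    rw [← add_assoc]
    exact hpar.add (even_two_mul k)
  have hp : Polynomial.derivative^[l] (Polynomial.Chebyshev.U ℝ (m : ℤ)) =
      Polynomial.C (chebV m l 0) *
        Polynomial.expand ℝ 2 (hypPoly n (-1 / 2) ((l : ℝ) + 1 / 2)) := by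
    ext k
    have hk : (k.factorial : ℝ) ≠ 0 := by positivity
    apply mul_left_cancel₀ hk
    rw [coeff_iterate_derivative_U, Polynomial.coeff_C_mul, Polynomial.coeff_expand two_pos]
    rcases Nat.even_or_odd' k with ⟨j, rfl | rfl⟩
    · rw [if_pos (dvd_mul_right 2 j), Nat.mul_div_cancel_left j two_pos, coeff_hypPoly, ← he]
      ring
    · rw [if_neg (by omega), ho, mul_zero, mul_zero]
  have h := congrArg (Polynomial.eval x) hp
  rwa [Polynomial.eval_mul, Polynomial.eval_C, Polynomial.expand_eval, eval_hypPoly] at h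

/-- The bound for `a = -1/2`: it grows with `n`, but it holds on the whole interval and has the
factor `2l + 1` on the left. -/
lemma hyp_neg_half_sq_le (n l : ℕ) {t : ℝ} (ht0 : 0 ≤ t) (ht1 : t ≤ 1) :
    (2 * l + 1) * ((1 - t) ^ l * hyp n (-1 / 2) ((l : ℝ) + 1 / 2) t ^ 2) ≤ (2 * (n : ℝ) + l + 1) ^ 2 := by
  have hx : (√t) ^ 2 = t := Real.sq_sqrt ht0
  have h := chebV_sq_le (2 * n + l) l (by omega) (x := √t) (by rw [hx]; exact ht1)
  rw [chebV_eq_hyp, hx] at h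
  have h1 := chebPi_le_chebV_sq (2 * n + l) l ⟨n + l, by omega⟩ (by omega)
  have h2 := chebPi_pos (show l ≤ 2 * n + l by omega)
  push_cast at h
  refine le_trans ?_ h
  rw [le_div_iff₀ h2, mul_pow]
  have h3 : 0 ≤ 1 - t := by linarith
  have h4 : 0 ≤ (2 * (l : ℝ) + 1) * ((1 - t) ^ l * hyp n (-1 / 2) ((l : ℝ) + 1 / 2) t ^ 2) := by
    positivity
  calc _ ≤ _ := mul_le_mul_of_nonneg_left h1 h4
    _ = _ := by ring

/-! ### Radial functions -/

/-- The normalized Jacobi polynomial times `r ^ l`, as a function of the radius `r = √(1 - t)`.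
At `r = 1 / (N - 1)` and `a = (3N - 8) / 2` this is the Kac eigenvalue up to sign. -/
def radial (n l : ℕ) (a r : ℝ) : ℝ := r ^ l * hyp n a ((l : ℝ) + 1 / 2) (1 - r ^ 2)

lemma kacKappa_eq_radial (N n l : ℕ) (hN : 3 ≤ N) :
    kacKappa N n l = (-1) ^ l * radial n l ((3 * (N : ℝ) - 8) / 2) (1 / ((N : ℝ) - 1)) := by
  rw [kacKappa_eq N n l hN, radial, neg_div, neg_pow (1 / ((N : ℝ) - 1)), one_div_pow _ 2]
  ring

lemma abs_kacKappa (N n l : ℕ) (hN : 3 ≤ N) :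
    |kacKappa N n l| = |radial n l ((3 * (N : ℝ) - 8) / 2) (1 / ((N : ℝ) - 1))| := by
  rw [kacKappa_eq_radial N n l hN, abs_mul, abs_pow, abs_neg, abs_one, one_pow, one_mul]

/-- The contiguous relation as a bound for the parameter `a + 1` in terms of the parameter `a`. -/
lemma radial_raise (n l : ℕ) {a r : ℝ} (ha : -1 < a) (hr0 : 0 ≤ r) (hr1 : r ≤ 1) :
    (2 * n + l + a + 5 / 2) * (1 - r ^ 2) * |radial n l (a + 1) r| ≤
      (a + 1) * (|radial n l a r| + |radial (n + 1) l a r|) := by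
  have h := hyp_raise n ((l : ℝ) + 1 / 2) (1 - r ^ 2) ha
  have e : (2 * n + l + a + 5 / 2) * (1 - r ^ 2) * radial n l (a + 1) r =
      (a + 1) * (radial n l a r - radial (n + 1) l a r) := by
    simp only [radial]
    linear_combination r ^ l * h
  have h1 : 0 ≤ 1 - r ^ 2 := by nlinarith
  have h2 : 0 < 2 * (n : ℝ) + l + a + 5 / 2 := by
    have : (0 : ℝ) ≤ 2 * n + l := by positivity
    linarith
  have h3 : 0 < a + 1 := by linarith
  calc _ = |(2 * n + l + a + 5 / 2) * (1 - r ^ 2) * radial n l (a + 1) r| := by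
        rw [abs_mul, abs_mul, abs_of_pos h2, abs_of_nonneg h1]
    _ = (a + 1) * |radial n l a r - radial (n + 1) l a r| := by
        rw [e, abs_mul, abs_of_pos h3]
    _ ≤ _ := mul_le_mul_of_nonneg_left (abs_sub _ _) h3.le

lemma radial_energy (n l : ℕ) {a r : ℝ} (ha : -1 / 2 ≤ a) (hr0 : 0 ≤ r) (hr1 : r ≤ 1) :
    (((2 * n + l + 1) * (2 * n + l + 2 * a + 2)) * r ^ 2 - l * (l + 1)) * radial n l a r ^ 2 ≤
      (2 * n + l + 1) * (2 * n + l + 2 * a + 2) - l * (l + 1) := by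
  have h := energy_bound n l ha (t := 1 - r ^ 2) (by nlinarith) (by nlinarith)
  rw [sub_sub_cancel] at h
  rw [radial, mul_pow, ← pow_mul, mul_comm l 2, pow_mul]
  linarith

/-- Sonine's bound: for small enough `r` the radial function is at most `r ^ l` times the absolute
value of the normalized Jacobi polynomial at the far end point `t = 1`, which is a product. -/
lemma radial_le_prod (n l : ℕ) {a r : ℝ} (ha : -1 < a) (hr0 : 0 ≤ r) (hr1 : r ≤ 1)
    (h : (2 * a + 2 * l + 3) * r ^ 2 ≤ 2 * l + 2) :
    |radial n l a r| ≤
      r ^ l * ∏ i ∈ Finset.range n, (((l : ℝ) + 3 / 2 + i) / (a + 1 + i)) := by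
  have hl : (0 : ℝ) ≤ l := l.cast_nonneg
  have h1 := abs_hyp_le_one n (b := (l : ℝ) + 1 / 2) (t := 1 - r ^ 2) ha (by linarith)
    (by nlinarith) (by nlinarith) (by nlinarith)
  rw [abs_hyp_one n ha (by linarith)] at h1
  rw [radial, abs_mul, abs_of_nonneg (pow_nonneg hr0 l)]
  refine mul_le_mul_of_nonneg_left (h1.trans_eq ?_) (pow_nonneg hr0 l)
  refine Finset.prod_congr rfl fun i _ => ?_
  congr 1
  ring

lemma radial_neg_half (n l : ℕ) {r : ℝ} (hr0 : 0 ≤ r) (hr1 : r ≤ 1) :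
    √(2 * l + 1) * |radial n l (-1 / 2) r| ≤ 2 * n + l + 1 := by
  have h := hyp_neg_half_sq_le n l (t := 1 - r ^ 2) (by nlinarith) (by nlinarith)
  rw [sub_sub_cancel, ← pow_mul, mul_comm 2 l, pow_mul, ← mul_pow] at h
  have h1 : (√(2 * l + 1)) ^ 2 = 2 * (l : ℝ) + 1 := Real.sq_sqrt (by positivity)
  refine abs_le_of_sq_le_sq' ?_ (by positivity) |>.2
  rw [mul_pow, h1, sq_abs]
  exact h

/-- For `a = 1/2` the factors `2n + l + 2` cancel, so the bound is uniform in `n`. -/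
lemma radial_half (n l : ℕ) {r : ℝ} (hr0 : 0 ≤ r) (hr1 : r ≤ 1) :
    (1 - r ^ 2) * √(2 * l + 1) * |radial n l (1 / 2) r| ≤ 1 := by
  have h := radial_raise n l (a := -1 / 2) (by norm_num) hr0 hr1
  have h1 := radial_neg_half n l hr0 hr1
  have h2 := radial_neg_half (n + 1) l hr0 hr1
  rw [show (-1 / 2 + 1 : ℝ) = 1 / 2 by norm_num] at h
  push_cast at h2
  have h3 := mul_le_mul_of_nonneg_left h (Real.sqrt_nonneg (2 * (l : ℝ) + 1))
  have h4 : (0 : ℝ) < 2 * n + l + 2 := by positivity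
  refine le_of_mul_le_mul_left ?_ h4
  linarith

lemma hom_smul (n : ℕ) (a b c s t : ℝ) : hom n a b (c * s) (c * t) = c ^ n * hom n a b s t := by
  rw [hom, hom, Finset.mul_sum]
  refine Finset.sum_congr rfl fun j hj => ?_
  have hj' : j + (n - j) = n := by have := Finset.mem_range.1 hj; omega
  have e : c ^ n = c ^ j * c ^ (n - j) := by rw [← pow_add, hj']
  rw [mul_pow, mul_pow, e]
  ring

/-- By homogeneity the bound for `a = -1/2` persists in the region `s + t ≤ 1`. -/
lemma hom_neg_half (n l : ℕ) {r t : ℝ} (hr : 0 < r) (ht : 0 ≤ t) (hrt : r ^ 2 + t ≤ 1) :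
    √(2 * l + 1) * |r ^ l * hom n (-1 / 2) ((l : ℝ) + 1 / 2) (r ^ 2) t| ≤ 2 * n + l + 1 := by
  set c := √(r ^ 2 + t) with hc
  have hc2 : c ^ 2 = r ^ 2 + t := Real.sq_sqrt (by positivity)
  have hc0 : 0 < c := Real.sqrt_pos.2 (by positivity)
  have hc1 : c ≤ 1 := by
    rw [hc]
    exact Real.sqrt_le_one.2 hrt
  have hrc : r / c ≤ 1 := by
    rw [div_le_one hc0]
    nlinarith
  have h := radial_neg_half n l (r := r / c) (by positivity) hrc
  have e : r ^ l * hom n (-1 / 2) ((l : ℝ) + 1 / 2) (r ^ 2) t =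
      c ^ (2 * n + l) * radial n l (-1 / 2) (r / c) := by
    have e1 : r ^ 2 = c ^ 2 * (1 - (1 - (r / c) ^ 2)) := by field_simp; ring
    have e2 : t = c ^ 2 * (1 - (r / c) ^ 2) := by
      field_simp
      linarith
    have e3 : hom n (-1 / 2) ((l : ℝ) + 1 / 2) (r ^ 2) t =
      (c ^ 2) ^ n * hyp n (-1 / 2) ((l : ℝ) + 1 / 2) (1 - (r / c) ^ 2) := by
      conv_lhs => rw [e1, e2]
      rw [hom_smul, hom_eq_hyp _ _ _ (by norm_num)]
    have e4 : c ^ l * (r / c) ^ l = r ^ l := by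
      rw [← mul_pow, mul_div_cancel₀ r hc0.ne']
    rw [e3, radial, pow_add, pow_mul, ← e4]
    ring
  rw [e, abs_mul, abs_of_pos (pow_pos hc0 _)]
  have h1 : c ^ (2 * n + l) ≤ 1 := pow_le_one₀ hc0.le hc1
  calc _ = c ^ (2 * n + l) * (√(2 * l + 1) * |radial n l (-1 / 2) (r / c)|) := by ring
    _ ≤ 1 * (√(2 * l + 1) * |radial n l (-1 / 2) (r / c)|) := by gcongr
    _ ≤ _ := by rwa [one_mul]

/-- A fractional integral formula: the form with `a = 0` is an average of the forms with
`a = -1/2`. -/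
lemma integral_hom (n : ℕ) (b s t : ℝ) :
    ∫ w in (0 : ℝ)..Real.pi, hom n (-1 / 2) b s (t * Real.sin w ^ 2) = Real.pi * hom n 0 b s t := by
  have e : ∀ w : ℝ, hom n (-1 / 2) b s (t * Real.sin w ^ 2) =
      ∑ j ∈ Finset.range (n + 1),
        (homCoef n (-1 / 2) b j * t ^ j * s ^ (n - j)) * Real.sin w ^ (2 * j) := by
    intro w
    refine Finset.sum_congr rfl fun j _ => ?_
    rw [mul_pow, ← pow_mul]
    ring
  simp only [e]
  rw [intervalIntegral.integral_finsetSum]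
  · rw [hom, Finset.mul_sum]
    refine Finset.sum_congr rfl fun j _ => ?_
    rw [intervalIntegral.integral_const_mul, integral_sin_pow_even, homCoef, homCoef]
    have h1 := (prod_shift_pos (show (-1 : ℝ) < -1 / 2 by norm_num) j).ne'
    have h2 := (prod_shift_pos (show (-1 : ℝ) < 0 by norm_num) j).ne'
    have h3 : ∏ i ∈ Finset.range j, ((2 * (i : ℝ) + 1) / (2 * i + 2)) =
        (∏ i ∈ Finset.range j, (-1 / 2 + 1 + (i : ℝ))) / ∏ i ∈ Finset.range j, (0 + 1 + (i : ℝ)) := by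
      rw [← Finset.prod_div_distrib]
      refine Finset.prod_congr rfl fun i _ => ?_
      have : (i : ℝ) + 1 ≠ 0 := by positivity
      have : 0 + 1 + (i : ℝ) ≠ 0 := by positivity
      field_simp
      ring
    rw [h3]
    field_simp
  · intro j _
    exact Continuous.intervalIntegrable (by fun_prop) _ _

/-- The bound for `a = 0` is inherited from `a = -1/2` by averaging. -/
lemma radial_zero (n l : ℕ) {r : ℝ} (hr0 : 0 < r) (hr1 : r ≤ 1) :
    √(2 * l + 1) * |radial n l 0 r| ≤ 2 * n + l + 1 := by
  have hq : 0 < √(2 * (l : ℝ) + 1) := Real.sqrt_pos.2 (by positivity)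
  have h := intervalIntegral.norm_integral_le_of_norm_le_const (a := 0) (b := Real.pi)
    (f := fun w => √(2 * (l : ℝ) + 1) * (r ^ l *
      hom n (-1 / 2) ((l : ℝ) + 1 / 2) (r ^ 2) ((1 - r ^ 2) * Real.sin w ^ 2)))
    (C := 2 * (n : ℝ) + l + 1) (fun w _ => by
      have h1 := Real.sin_sq_le_one w
      have h2 : 0 ≤ 1 - r ^ 2 := by nlinarith
      have := hom_neg_half n l hr0 (t := (1 - r ^ 2) * Real.sin w ^ 2) (by positivity)
        (by nlinarith)
      rwa [Real.norm_eq_abs, abs_mul, abs_of_pos hq])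
  rw [intervalIntegral.integral_const_mul, intervalIntegral.integral_const_mul, integral_hom,
    sub_zero, abs_of_pos Real.pi_pos, Real.norm_eq_abs] at h
  have e : hom n 0 ((l : ℝ) + 1 / 2) (r ^ 2) (1 - r ^ 2) =
      hyp n 0 ((l : ℝ) + 1 / 2) (1 - r ^ 2) := by
    have := hom_eq_hyp n ((l : ℝ) + 1 / 2) (1 - r ^ 2) (show (-1 : ℝ) < 0 by norm_num)
    rwa [sub_sub_cancel] at this
  have e2 : √(2 * (l : ℝ) + 1) * (r ^ l * (Real.pi * hom n 0 ((l : ℝ) + 1 / 2) (r ^ 2) (1 - r ^ 2)))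
      = (√(2 * (l : ℝ) + 1) * radial n l 0 r) * Real.pi := by
    rw [e, radial]
    ring
  rw [e2, abs_mul, abs_of_pos Real.pi_pos, abs_mul, abs_of_pos hq] at h
  exact le_of_mul_le_mul_right h Real.pi_pos

/-- For `a = 1` the bound is again uniform in `n`, since `2n + l + 2 ≤ 2n + l + 5/2`. -/
lemma radial_one (n l : ℕ) {r : ℝ} (hr0 : 0 < r) (hr1 : r ≤ 1) :
    (1 - r ^ 2) * √(2 * l + 1) * |radial n l 1 r| ≤ 2 := by
  have h := radial_raise n l (a := 0) (by norm_num) hr0.le hr1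
  have h1 := radial_zero n l hr0 hr1
  have h2 := radial_zero (n + 1) l hr0 hr1
  rw [zero_add] at h
  push_cast at h2
  have h3 := mul_le_mul_of_nonneg_left h (Real.sqrt_nonneg (2 * (l : ℝ) + 1))
  have h4 : (0 : ℝ) < 2 * n + l + 5 / 2 := by positivity
  refine le_of_mul_le_mul_left ?_ h4
  linarith

/-! ### Three particles -/

lemma kacKappa_three_eq (n l : ℕ) :
    kacKappa 3 n l = ((hyp n (1 / 2) ((l : ℚ) + 1 / 2) (3 / 4) * (-1 / 2) ^ l : ℚ) : ℝ) := by
  have h := hyp_ratCast n (1 / 2) ((l : ℚ) + 1 / 2) (3 / 4)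
  push_cast at h ⊢
  rw [← h, kacKappa_eq 3 n l le_rfl]
  norm_num

set_option maxRecDepth 10000 in
/-- The finitely many small cases, evaluated in `ℚ`. -/
lemma three_finite : ∀ n : ℕ, n < 8 → ∀ l : ℕ, l < 8 → 0 < n + l → ¬(n = 1 ∧ l = 1) →
    (-1 / 2 : ℚ) ≤ hyp n (1 / 2) ((l : ℚ) + 1 / 2) (3 / 4) * (-1 / 2) ^ l ∧
      hyp n (1 / 2) ((l : ℚ) + 1 / 2) (3 / 4) * (-1 / 2) ^ l ≤ 13 / 40 := by
  decide +kernel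

lemma kacKappa_three_two_two : kacKappa 3 2 2 = 13 / 40 := by
  have h : (hyp 2 (1 / 2) (((2 : ℕ) : ℚ) + 1 / 2) (3 / 4) * (-1 / 2) ^ 2 : ℚ) = 13 / 40 := by
    decide +kernel
  rw [kacKappa_three_eq, h]
  norm_num

/-- For `l ≥ 8` the bound for `a = 1/2` suffices; for small `l` and large `n` the energy inequality at
`a = -1/2` is carried to `a = 1/2`. -/
lemma abs_kacKappa_three_le (n l : ℕ) (h : 8 ≤ l ∨ 16 ≤ 2 * n + l) :
    |kacKappa 3 n l| ≤ 13 / 40 := by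
  have e : |kacKappa 3 n l| = |radial n l (1 / 2) (1 / 2)| := by
    rw [abs_kacKappa 3 n l le_rfl]
    norm_num
  rw [e]
  by_cases hl : 8 ≤ l
  · have h1 := radial_half n l (r := 1 / 2) (by norm_num) (by norm_num)
    have h2 : (4.12 : ℝ) ≤ √(2 * l + 1) := by
      apply Real.le_sqrt_of_sq_le
      have : (8 : ℝ) ≤ l := by exact_mod_cast hl
      norm_num
      linarith
    nlinarith [abs_nonneg (radial n l (1 / 2) (1 / 2))]
  · have hl' : (l : ℝ) ≤ 7 := by
      have : l ≤ 7 := by omega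
      exact_mod_cast this
    have hl0 : (0 : ℝ) ≤ l := l.cast_nonneg
    -- the energy inequality at `a = -1/2` gives `|radial| ≤ 3.8` once `2n + l ≥ 16`
    have key : ∀ k : ℕ, n ≤ k → |radial k l (-1 / 2) (1 / 2)| ≤ 3.8 := by
      intro k hk
      have h1 := radial_energy k l (a := -1 / 2) (r := 1 / 2) le_rfl (by norm_num) (by norm_num)
      have h2 : (16 : ℝ) ≤ 2 * k + l := by
        have : 16 ≤ 2 * k + l := by omega
        exact_mod_cast this
      have h3 : (289 : ℝ) ≤ (2 * k + l + 1) * (2 * k + l + 2 * (-1 / 2) + 2) := by nlinarith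
      have h4 : (l : ℝ) * (l + 1) ≤ 56 := by nlinarith
      generalize ((2 * (k : ℝ) + l + 1) * (2 * k + l + 2 * (-1 / 2) + 2)) = C at h1 h3
      generalize (l : ℝ) * (l + 1) = L at h1 h4
      refine abs_le_of_sq_le_sq ?_ (by norm_num)
      have hpos : 0 < C * (1 / 2) ^ 2 - L := by linarith
      refine le_of_mul_le_mul_left (h1.trans ?_) hpos
      linarith
    have h1 := radial_raise n l (a := -1 / 2) (r := 1 / 2) (by norm_num) (by norm_num)
      (by norm_num)
    have h2 := key n le_rfl
    have h3 := key (n + 1) (by omega)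
    have h4 : (16 : ℝ) ≤ 2 * n + l := by
      have : 16 ≤ 2 * n + l := by omega
      exact_mod_cast this
    norm_num at h1 h2 h3 ⊢
    nlinarith [abs_nonneg (radial n l (1 / 2) (1 / 2))]

lemma three_bounds (n l : ℕ) (h : 0 < n + l) (h11 : ¬(n = 1 ∧ l = 1)) :
    -1 / 2 ≤ kacKappa 3 n l ∧ kacKappa 3 n l ≤ 13 / 40 := by
  by_cases hf : n < 8 ∧ l < 8
  · obtain ⟨h1, h2⟩ := three_finite n hf.1 l hf.2 h h11
    rw [kacKappa_three_eq]
    constructor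
    · have := (Rat.cast_le (K := ℝ)).2 h1
      push_cast at this ⊢
      exact this
    · have := (Rat.cast_le (K := ℝ)).2 h2
      push_cast at this ⊢
      exact this
  · have := abs_le.1 (abs_kacKappa_three_le n l (by omega))
    constructor <;> linarith

/-! ### Four particles -/

lemma kacKappa_four_eq (n l : ℕ) :
    kacKappa 4 n l = ((hyp n 2 ((l : ℚ) + 1 / 2) (8 / 9) * (-1 / 3) ^ l : ℚ) : ℝ) := by
  have h := hyp_ratCast n 2 ((l : ℚ) + 1 / 2) (8 / 9)
  push_cast at h ⊢
  rw [← h, kacKappa_eq 4 n l (by norm_num)]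
  norm_num

set_option maxRecDepth 10000 in
/-- The finitely many small cases, evaluated in `ℚ`. -/
lemma four_finite : ∀ n : ℕ, n < 14 → ∀ l : ℕ, l < 27 → 2 < n + l → 2 * n + l < 27 →
    (-1 / 3 : ℚ) ≤ hyp n 2 ((l : ℚ) + 1 / 2) (8 / 9) * (-1 / 3) ^ l ∧
      hyp n 2 ((l : ℚ) + 1 / 2) (8 / 9) * (-1 / 3) ^ l < 23 / 243 := by
  decide +kernel

lemma kacKappa_four_two_zero : kacKappa 4 2 0 = 23 / 243 := by
  have h : (hyp 2 2 (((0 : ℕ) : ℚ) + 1 / 2) (8 / 9) * (-1 / 3) ^ 0 : ℚ) = 23 / 243 := by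
    decide +kernel
  rw [kacKappa_four_eq, h]
  norm_num

/-- For `l ≥ 6` the bound for `a = 1` is carried to `a = 2`; for small `l` and large `n` the energy
inequality at `a = 0` is carried to `a = 2` in two steps. -/
lemma abs_kacKappa_four_lt (n l : ℕ) (h : 27 ≤ 2 * n + l) : |kacKappa 4 n l| < 23 / 243 := by
  have e : |kacKappa 4 n l| = |radial n l 2 (1 / 3)| := by
    rw [abs_kacKappa 4 n l (by norm_num)]
    norm_num
  rw [e]
  have h4 : (27 : ℝ) ≤ 2 * n + l := by exact_mod_cast h
  have hr2 := radial_raise n l (a := 1) (r := 1 / 3) (by norm_num) (by norm_num) (by norm_num)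
  rw [one_add_one_eq_two] at hr2
  have hpos := abs_nonneg (radial n l 2 (1 / 3))
  by_cases hl : 6 ≤ l
  · have h1 := radial_one n l (r := 1 / 3) (by norm_num) (by norm_num)
    have h1' := radial_one (n + 1) l (r := 1 / 3) (by norm_num) (by norm_num)
    have h2 : (3.6 : ℝ) ≤ √(2 * l + 1) := by
      apply Real.le_sqrt_of_sq_le
      have : (6 : ℝ) ≤ l := by exact_mod_cast hl
      norm_num
      linarith
    have k1 : |radial n l 1 (1 / 3)| ≤ 0.625 := by
      nlinarith [abs_nonneg (radial n l 1 (1 / 3))]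
    have k1' : |radial (n + 1) l 1 (1 / 3)| ≤ 0.625 := by
      nlinarith [abs_nonneg (radial (n + 1) l 1 (1 / 3))]
    norm_num at hr2 k1 k1'
    nlinarith
  · have hl' : (l : ℝ) ≤ 5 := by
      have : l ≤ 5 := by omega
      exact_mod_cast this
    have hl0 : (0 : ℝ) ≤ l := l.cast_nonneg
    -- the energy inequality at `a = 0` gives `|radial| ≤ 3.61` once `2n + l ≥ 27`
    have key : ∀ k : ℕ, n ≤ k → |radial k l 0 (1 / 3)| ≤ 3.61 := by
      intro k hk
      have h1 := radial_energy k l (a := 0) (r := 1 / 3) (by norm_num) (by norm_num) (by norm_num)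
      have h2 : (27 : ℝ) ≤ 2 * k + l := by
        have : 27 ≤ 2 * k + l := by omega
        exact_mod_cast this
      have h3 : (812 : ℝ) ≤ (2 * k + l + 1) * (2 * k + l + 2 * 0 + 2) := by nlinarith
      have h4 : (l : ℝ) * (l + 1) ≤ 30 := by nlinarith
      generalize ((2 * (k : ℝ) + l + 1) * (2 * k + l + 2 * 0 + 2)) = C at h1 h3
      generalize (l : ℝ) * (l + 1) = L at h1 h4
      refine abs_le_of_sq_le_sq ?_ (by norm_num)
      have hpos : 0 < C * (1 / 3) ^ 2 - L := by linarith
      refine le_of_mul_le_mul_left (h1.trans ?_) hpos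
      norm_num
      linarith
    have key1 : ∀ k : ℕ, n ≤ k → |radial k l 1 (1 / 3)| ≤ 0.28 := by
      intro k hk
      have h1 := radial_raise k l (a := 0) (r := 1 / 3) (by norm_num) (by norm_num)
        (by norm_num)
      have h2 := key k hk
      have h3 := key (k + 1) (by omega)
      have h5 : (27 : ℝ) ≤ 2 * k + l := by
        have : 27 ≤ 2 * k + l := by omega
        exact_mod_cast this
      norm_num at h1 h2 h3 ⊢
      nlinarith [abs_nonneg (radial k l 1 (1 / 3))]
    have k1 := key1 n le_rfl
    have k1' := key1 (n + 1) (by omega)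
    norm_num at hr2 k1 k1'
    nlinarith

lemma four_bounds (n l : ℕ) (h : 2 < n + l) :
    -1 / 3 ≤ kacKappa 4 n l ∧ kacKappa 4 n l < 23 / 243 := by
  by_cases hf : 2 * n + l < 27
  · obtain ⟨h1, h2⟩ := four_finite n (by omega) l (by omega) h hf
    rw [kacKappa_four_eq]
    constructor
    · have := (Rat.cast_le (K := ℝ)).2 h1
      push_cast at this ⊢
      exact this
    · have := (Rat.cast_lt (K := ℝ)).2 h2
      push_cast at this ⊢
      exact this
  · have := abs_lt.1 (abs_kacKappa_four_lt n l (by omega))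
    constructor <;> linarith

/-! ### Five or more particles, large `n` and `l` -/

/-- The contiguous relation turns a bound `B` for all `n ≥ 6` into one for the next parameter. -/
lemma radial_step (l : ℕ) {a r B : ℝ} (ha : -1 < a) (hr0 : 0 ≤ r) (hr1 : r < 1)
    (h : ∀ n, 6 ≤ n → |radial n l a r| ≤ B) (n : ℕ) (hn : 6 ≤ n) :
    |radial n l (a + 1) r| ≤ 2 * (a + 1) * B / ((l + a + 29 / 2) * (1 - r ^ 2)) := by
  have hl : (0 : ℝ) ≤ l := l.cast_nonneg
  have hn' : (6 : ℝ) ≤ n := by exact_mod_cast hn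
  have ht : 0 < 1 - r ^ 2 := by nlinarith
  have hD : 0 < (l + a + 29 / 2) * (1 - r ^ 2) := mul_pos (by linarith) ht
  have h1 := radial_raise n l ha hr0 hr1.le
  have h2 := h n hn
  have h3 := h (n + 1) (by omega)
  rw [le_div_iff₀ hD]
  calc |radial n l (a + 1) r| * ((l + a + 29 / 2) * (1 - r ^ 2))
      ≤ |radial n l (a + 1) r| * ((2 * n + l + a + 5 / 2) * (1 - r ^ 2)) := by
        refine mul_le_mul_of_nonneg_left ?_ (abs_nonneg _)
        exact mul_le_mul_of_nonneg_right (by linarith) ht.le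
    _ ≤ (a + 1) * (|radial n l a r| + |radial (n + 1) l a r|) := by linarith
    _ ≤ (a + 1) * (B + B) := by
        have : 0 ≤ a + 1 := by linarith
        gcongr
    _ = _ := by ring

lemma radial_step' (l : ℕ) {a r B : ℝ} (ha : -1 < a) (hr0 : 0 ≤ r) (hr1 : r ≤ 1 / 4)
    (h : ∀ n, 6 ≤ n → |radial n l a r| ≤ B) (n : ℕ) (hn : 6 ≤ n) :
    |radial n l (a + 1) r| ≤ (32 / 15) * (a + 1) * B / (l + a + 29 / 2) := by
  have hl : (0 : ℝ) ≤ l := l.cast_nonneg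
  refine (radial_step l ha hr0 (by linarith) h n hn).trans ?_
  have hB : 0 ≤ B := (abs_nonneg _).trans (h 6 le_rfl)
  have hD : 0 < l + a + 29 / 2 := by linarith
  have ht : 15 / 16 ≤ 1 - r ^ 2 := by nlinarith
  have ha' : 0 ≤ a + 1 := by linarith
  rw [show (32 / 15) * (a + 1) * B / (l + a + 29 / 2) =
    2 * (a + 1) * B / ((l + a + 29 / 2) * (15 / 16)) by field_simp; ring]
  gcongr

/-- Raising the parameter by one does not spoil a bound as long as it stays at most `l`
and at most `(3q - 5) / 2`, where `q = 1 / r`: the factor `2(a + 1) / ((l + a + 29/2)(1 - r²))` of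
`radial_step` is then at most one. -/
lemma radial_iter (l : ℕ) {a q B : ℝ} (ha : -1 < a) (hq : 4 ≤ q)
    (h : ∀ n, 6 ≤ n → |radial n l a (1 / q)| ≤ B) (j : ℕ) (hjl : a + j ≤ l)
    (hjq : 2 * (a + j) ≤ 3 * q - 5) (n : ℕ) (hn : 6 ≤ n) :
    |radial n l (a + j) (1 / q)| ≤ B := by
  induction j generalizing n with
  | zero => simpa using h n hn
  | succ j ih =>
    push_cast at hjl hjq ⊢
    have hj : (0 : ℝ) ≤ j := j.cast_nonneg
    have hr : 1 / q < 1 := by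
      rw [div_lt_one (by linarith)]
      linarith
    have h1 := radial_step l (a := a + j) (by linarith) (by positivity) hr
      (fun n hn => ih (by linarith) (by linarith) n hn) n hn
    rw [← add_assoc]
    refine h1.trans ?_
    have hB : 0 ≤ B := (abs_nonneg _).trans (h 6 le_rfl)
    have ht : 0 < 1 - (1 / q) ^ 2 := by
      have : 0 < 1 / q := by positivity
      nlinarith
    have hD : 0 < ((l : ℝ) + (a + j) + 29 / 2) * (1 - (1 / q) ^ 2) := mul_pos (by linarith) ht
    rw [div_le_iff₀ hD, mul_comm B]
    refine mul_le_mul_of_nonneg_right ?_ hB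
    have e : (2 * (a + j) + 31 / 2) * (1 / q) ^ 2 ≤ 27 / 2 := by
      rw [div_pow, one_pow, mul_one_div, div_le_iff₀ (by positivity)]
      nlinarith
    nlinarith

/-- The case of large `l` and `n`: the bounds for `a = 1/2` (odd `N`) or `a = 1` (even `N`) are
carried up to `a = (3N - 8) / 2`; the first three steps gain a factor of order `l ^ (-3)`. -/
lemma abs_radial_lt_large (N n l : ℕ) (hN : 5 ≤ N) (hl : 3 * N ≤ 2 * l + 8) (hn : 6 ≤ n) :
    |radial n l ((3 * (N : ℝ) - 8) / 2) (1 / ((N : ℝ) - 1))| < (1 / ((N : ℝ) - 1)) ^ 2 := by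
  have hN' : (5 : ℝ) ≤ N := by exact_mod_cast hN
  have hl' : 3 * (N : ℝ) ≤ 2 * l + 8 := by exact_mod_cast hl
  have hl4 : (4 : ℝ) ≤ l := by
    have : 4 ≤ l := by omega
    exact_mod_cast this
  obtain ⟨q, hq⟩ : ∃ q : ℝ, (N : ℝ) = q + 1 := ⟨N - 1, by ring⟩
  have hq4 : 4 ≤ q := by linarith
  have eq1 : (N : ℝ) - 1 = q := by linarith
  rw [eq1]
  have hr0 : 0 < 1 / q := by positivity
  have hr1 : 1 / q ≤ 1 / 4 := one_div_le_one_div_of_le (by norm_num) hq4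
  have hsq : (3 : ℝ) ≤ √(2 * l + 1) := by
    apply Real.le_sqrt_of_sq_le
    linarith
  have ht : 15 / 16 ≤ 1 - (1 / q) ^ 2 := by nlinarith
  rcases Nat.even_or_odd' N with ⟨k, hk | hk⟩
  · have hk3 : 3 ≤ k := by omega
    have b0 : ∀ n, 6 ≤ n → |radial n l 1 (1 / q)| ≤ 32 / 45 := fun n _ => by
      have h := radial_one n l hr0 (hr1.trans (by norm_num))
      have h1 : 45 / 16 ≤ (1 - (1 / q) ^ 2) * √(2 * l + 1) := by nlinarith
      nlinarith [abs_nonneg (radial n l 1 (1 / q))]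
    have b1 := radial_step' l (by norm_num) hr0.le hr1 b0
    have b2 := radial_step' l (by norm_num) hr0.le hr1 b1
    have b3 := radial_step' l (by norm_num) hr0.le hr1 b2
    have hkq : 2 * (k : ℝ) = q + 1 := by rw [← hq, hk]; push_cast; ring
    have hkc : ((3 * k - 8 : ℕ) : ℝ) = 3 * k - 8 := by
      rw [Nat.cast_sub (by omega)]; push_cast; ring
    have h := radial_iter l (by norm_num) hq4 b3 (3 * k - 8) (by rw [hkc]; linarith)
      (by rw [hkc]; linarith) n hn
    rw [hkc, show (1 : ℝ) + 1 + 1 + 1 + (3 * k - 8) = (3 * N - 8) / 2 by rw [hq, ← hkq]; ring] at h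
    refine h.trans_lt ?_
    have e : ∀ x : ℝ, 0 ≤ x → 32 / 15 * (1 + 1 + 1 + 1) * (32 / 15 * (1 + 1 + 1) *
        (32 / 15 * (1 + 1) * (32 / 45) / (x + 1 + 29 / 2)) / (x + (1 + 1) + 29 / 2)) /
        (x + (1 + 1 + 1) + 29 / 2) =
        (32 / 15) ^ 3 * 24 * (32 / 45) / ((x + 31 / 2) * (x + 33 / 2) * (x + 35 / 2)) := by
      intro x hx
      have h1 : x + 1 + 29 / 2 ≠ 0 := by positivity
      have h2 : x + (1 + 1) + 29 / 2 ≠ 0 := by positivity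
      have h3 : x + (1 + 1 + 1) + 29 / 2 ≠ 0 := by positivity
      field_simp
      ring
    rw [e l (by positivity), div_pow 1 q, one_pow,
      div_lt_div_iff₀ (by positivity) (by positivity)]
    have hq2 : q ^ 2 ≤ ((2 * l + 5) / 3) ^ 2 := by gcongr; linarith
    have hc : 0 ≤ (l : ℝ) * (l - 27 / 2) ^ 2 := by positivity
    nlinarith
  · have hk2 : 2 ≤ k := by omega
    have b0 : ∀ n, 6 ≤ n → |radial n l (1 / 2) (1 / q)| ≤ 16 / 45 := fun n _ => by
      have h := radial_half n l hr0.le (hr1.trans (by norm_num))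
      have h1 : 45 / 16 ≤ (1 - (1 / q) ^ 2) * √(2 * l + 1) := by nlinarith
      nlinarith [abs_nonneg (radial n l (1 / 2) (1 / q))]
    have b1 := radial_step' l (by norm_num) hr0.le hr1 b0
    have b2 := radial_step' l (by norm_num) hr0.le hr1 b1
    have b3 := radial_step' l (by norm_num) hr0.le hr1 b2
    have hkq : 2 * (k : ℝ) = q := by
      have : (N : ℝ) = 2 * k + 1 := by rw [hk]; push_cast; ring
      linarith
    have hkc : ((3 * k - 6 : ℕ) : ℝ) = 3 * k - 6 := by
      rw [Nat.cast_sub (by omega)]; push_cast; ring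
    have h := radial_iter l (by norm_num) hq4 b3 (3 * k - 6) (by rw [hkc]; linarith)
      (by rw [hkc]; linarith) n hn
    rw [hkc, show (1 / 2 : ℝ) + 1 + 1 + 1 + (3 * k - 6) = (3 * N - 8) / 2 by
      rw [hq, ← hkq]; ring] at h
    refine h.trans_lt ?_
    have e : ∀ x : ℝ, 0 ≤ x → 32 / 15 * (1 / 2 + 1 + 1 + 1) * (32 / 15 * (1 / 2 + 1 + 1) *
        (32 / 15 * (1 / 2 + 1) * (16 / 45) / (x + 1 / 2 + 29 / 2)) / (x + (1 / 2 + 1) + 29 / 2)) /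
        (x + (1 / 2 + 1 + 1) + 29 / 2) =
        (32 / 15) ^ 3 * (105 / 8) * (16 / 45) / ((x + 15) * (x + 16) * (x + 17)) := by
      intro x hx
      have h1 : x + 1 / 2 + 29 / 2 ≠ 0 := by positivity
      have h2 : x + (1 / 2 + 1) + 29 / 2 ≠ 0 := by positivity
      have h3 : x + (1 / 2 + 1 + 1) + 29 / 2 ≠ 0 := by positivity
      field_simp
      ring
    rw [e l (by positivity), div_pow 1 q, one_pow,
      div_lt_div_iff₀ (by positivity) (by positivity)]
    have hq2 : q ^ 2 ≤ ((2 * l + 5) / 3) ^ 2 := by gcongr; linarith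
    have hc : 0 ≤ (l : ℝ) * (l - 27 / 2) ^ 2 := by positivity
    nlinarith

/-! ### Five or more particles -/

/-- The product bounding a radial function in Sonine's bound. -/
def sonineProd (n l : ℕ) (a : ℝ) : ℝ :=
  ∏ i ∈ Finset.range n, (((l : ℝ) + 3 / 2 + i) / (a + 1 + i))

lemma sonineProd_nonneg (n l : ℕ) {a : ℝ} (ha : -1 < a) : 0 ≤ sonineProd n l a :=
  Finset.prod_nonneg fun i _ =>
    div_nonneg (by positivity) (by linarith [(i.cast_nonneg : (0 : ℝ) ≤ i)])

lemma sonineProd_le (l : ℕ) {a : ℝ} (ha : (l : ℝ) + 1 / 2 ≤ a) {m n : ℕ} (h : m ≤ n) :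
    sonineProd n l a ≤ sonineProd m l a := by
  have hl : (0 : ℝ) ≤ l := l.cast_nonneg
  induction n, h using Nat.le_induction with
  | base => exact le_rfl
  | succ n _ ih =>
    rw [sonineProd, Finset.prod_range_succ, ← sonineProd]
    have hn : (0 : ℝ) ≤ n := n.cast_nonneg
    refine (mul_le_of_le_one_right (sonineProd_nonneg n l (by linarith)) ?_).trans ih
    exact (div_le_one (by linarith)).2 (by linarith)

lemma abs_kacKappa_le (N n l : ℕ) (hN : 5 ≤ N) :
    |kacKappa N n l| ≤
      (1 / ((N : ℝ) - 1)) ^ l * sonineProd n l ((3 * (N : ℝ) - 8) / 2) := by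
  have hN' : (5 : ℝ) ≤ N := by exact_mod_cast hN
  have hl : (0 : ℝ) ≤ l := l.cast_nonneg
  have h0 : 0 < (N : ℝ) - 1 := by linarith
  rw [abs_kacKappa N n l (by omega)]
  refine radial_le_prod n l (by linarith) (by positivity) ?_ ?_
  · rw [div_le_one h0]
    linarith
  · rw [one_div_pow, mul_one_div, div_le_iff₀ (by positivity)]
    have h16 : 4 * ((N : ℝ) - 1) ≤ ((N : ℝ) - 1) ^ 2 := by nlinarith
    nlinarith [mul_nonneg hl (show 0 ≤ ((N : ℝ) - 1) ^ 2 - 1 by linarith)]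

lemma kacKappa_zero_two (N : ℕ) (hN : 5 ≤ N) : kacKappa N 0 2 = 1 / ((N : ℝ) - 1) ^ 2 := by
  rw [kacKappa_eq N 0 2 (by omega), hyp_zero_left, one_mul, div_pow]
  norm_num

lemma kacKappa_five_three_zero : |kacKappa 5 3 0| < 1 / 16 := by
  have h := hyp_ratCast 3 (7 / 2) (((0 : ℕ) : ℚ) + 1 / 2) (15 / 16)
  have e : |(hyp 3 (7 / 2) (((0 : ℕ) : ℚ) + 1 / 2) (15 / 16) : ℚ)| < 1 / 16 := by
    decide +kernel
  have e' := (Rat.cast_lt (K := ℝ)).2 e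
  rw [Rat.cast_abs, ← h] at e'
  rw [kacKappa_eq 5 3 0 (by norm_num)]
  push_cast at e' ⊢
  norm_num at e' ⊢
  exact e'

/-- The polynomial factor of `κ_{2,1}` is nonnegative: the negative middle term of the binary form
is outweighed by the last one. -/
lemma kacKappa_two_one_nonpos (N : ℕ) (hN : 5 ≤ N) : kacKappa N 2 1 ≤ 0 := by
  have hN' : (5 : ℝ) ≤ N := by exact_mod_cast hN
  obtain ⟨q, hq⟩ : ∃ q : ℝ, (N : ℝ) = q + 1 := ⟨N - 1, by ring⟩
  have hq4 : 4 ≤ q := by linarith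
  have ha : -1 < (3 * (N : ℝ) - 8) / 2 := by linarith
  have eq1 : (N : ℝ) - 1 = q := by linarith
  rw [kacKappa_eq N 2 1 (by omega), ← hom_eq_hyp _ _ _ ha, eq1]
  refine mul_nonpos_of_nonneg_of_nonpos ?_ ?_
  · have e : hom 2 ((3 * (N : ℝ) - 8) / 2) (((1 : ℕ) : ℝ) + 1 / 2) (1 - (1 - 1 / q ^ 2))
        (1 - 1 / q ^ 2) * (3 * (q - 1) * (3 * q - 1) * q ^ 4) =
        3 * (q - 1) * (3 * q - 1) - 14 * (3 * q - 1) * (q ^ 2 - 1) +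
          35 * (q ^ 2 - 1) ^ 2 := by
      have h1 : q ≠ 0 := by positivity
      have h2 : q - 1 ≠ 0 := by linarith
      have h3 : 3 * q - 1 ≠ 0 := by linarith
      rw [hq]
      simp only [hom, homCoef, genBinom, Finset.sum_range_succ, Finset.prod_range_succ,
        Finset.sum_range_zero, Finset.prod_range_zero, Nat.factorial]
      have h4 : (3 * (q + 1) - 8) / 2 + 1 = 3 * (q - 1) / 2 := by ring
      have h5 : 3 * (q - 1) / 2 + 1 = (3 * q - 1) / 2 := by ring
      push_cast
      simp only [h4, h5]
      norm_num
      generalize 3 * q - 1 = v at h3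
      field_simp
      ring
    have hpos : 0 < 3 * (q - 1) * (3 * q - 1) * q ^ 4 := by
      have h2 : 0 < q - 1 := by linarith
      have h3 : 0 < 3 * q - 1 := by linarith
      positivity
    refine le_of_mul_le_mul_right ?_ hpos
    rw [zero_mul, e]
    have k1 : 0 ≤ (q - 1) * (3 * q - 1) := by nlinarith
    have k2 : 0 ≤ (q ^ 2 - 1) * (35 * (q ^ 2 - 1) - 14 * (3 * q - 1)) :=
      mul_nonneg (by nlinarith) (by nlinarith)
    nlinarith
  · rw [pow_one, neg_div]
    have : 0 < 1 / q := by positivity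
    linarith

/-- Here `q = N - 1`; since `1 / q² ≤ 1 / q`, a bound on `|κ|` gives both inequalities. -/
lemma five_bounds_aux {q κ : ℝ} (hq : 4 ≤ q) (h : |κ| < 1 / q ^ 2) :
    -1 / q ≤ κ ∧ κ < 1 / q ^ 2 := by
  have h1 : 1 / q ^ 2 ≤ 1 / q := one_div_le_one_div_of_le (by linarith) (by nlinarith)
  rw [neg_div]
  constructor <;> linarith [abs_lt.1 h]

/-- If `l ≤ α - 1/2`, all factors of Sonine's bound are at most one. Apart from `κ_{2,1}` and
`κ_{3,0}(5)`, it suffices to keep the first few of them. -/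
lemma five_bounds_small (N n l : ℕ) (hN : 5 ≤ N) (h : 2 < n + l) (hl : 2 * l + 9 ≤ 3 * N) :
    -1 / ((N : ℝ) - 1) ≤ kacKappa N n l ∧ kacKappa N n l < 1 / ((N : ℝ) - 1) ^ 2 := by
  have hN' : (5 : ℝ) ≤ N := by exact_mod_cast hN
  have hl' : 2 * (l : ℝ) + 9 ≤ 3 * N := by exact_mod_cast hl
  obtain ⟨q, hq⟩ : ∃ q : ℝ, (N : ℝ) = q + 1 := ⟨N - 1, by ring⟩
  have hq4 : 4 ≤ q := by linarith
  have eq1 : (N : ℝ) - 1 = q := by linarith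
  have eq2 : (3 * (N : ℝ) - 8) / 2 = 3 * (q - 1) / 2 - 1 := by linarith
  have hK := abs_kacKappa_le N n l hN
  rw [eq1, eq2] at hK
  rw [eq1]
  have hP : ∀ m, m ≤ n → |kacKappa N n l| ≤ (1 / q) ^ l * sonineProd m l (3 * (q - 1) / 2 - 1) :=
    fun m hm => hK.trans (mul_le_mul_of_nonneg_left (sonineProd_le l (by linarith) hm)
      (by positivity))
  have hr : 1 / q ≤ 1 / 4 := one_div_le_one_div_of_le (by norm_num) hq4
  have hr0 : 0 < 1 / q := by positivity
  have d1 : 0 < q - 1 := by linarith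
  have d2 : 0 < 3 * q - 1 := by linarith
  have d3 : 0 < 3 * q + 1 := by linarith
  have e0 : 3 * (q - 1) / 2 - 1 + 1 = 3 * (q - 1) / 2 := by ring
  have e1 : 3 * (q - 1) / 2 + 1 = (3 * q - 1) / 2 := by ring
  have e2 : 3 * (q - 1) / 2 + 2 = (3 * q + 1) / 2 := by ring
  rcases (by omega : l = 0 ∨ l = 1 ∨ l = 2 ∨ 3 ≤ l) with rfl | rfl | rfl | hl3
  · refine five_bounds_aux hq4 ?_
    rcases (by omega : 6 ≤ N ∨ N = 5) with hN6 | rfl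
    · have hq5 : 5 ≤ q := by
        have : (6 : ℝ) ≤ N := by exact_mod_cast hN6
        linarith
      refine (hP 3 (by omega)).trans_lt ?_
      simp only [sonineProd, Finset.prod_range_succ, Finset.prod_range_zero, e0]
      push_cast
      simp only [add_zero]
      rw [e1, e2, show (1 / q) ^ 0 * (1 * ((0 + 3 / 2) / (3 * (q - 1) / 2)) *
        ((0 + 3 / 2 + 1) / ((3 * q - 1) / 2)) * ((0 + 3 / 2 + 2) / ((3 * q + 1) / 2))) =
        35 / ((q - 1) * ((3 * q - 1) * (3 * q + 1))) by
          generalize 3 * q - 1 = v at d2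
          field_simp
          norm_num]
      rw [div_lt_div_iff₀ (by positivity) (by positivity)]
      nlinarith [mul_nonneg (sub_nonneg.2 hq5) (sq_nonneg q)]
    · have hq' : q = 4 := by norm_num at hq; linarith
      rcases (by omega : n = 3 ∨ 4 ≤ n) with rfl | hn
      · refine kacKappa_five_three_zero.trans_eq ?_
        rw [hq']
        norm_num
      · refine (hP 4 hn).trans_lt ?_
        rw [hq']
        norm_num [sonineProd, Finset.prod_range_succ]
  · rcases (by omega : n = 2 ∨ 3 ≤ n) with rfl | hn
    · have h1 := kacKappa_two_one_nonpos N hN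
      have h2 := hP 0 (by omega)
      rw [sonineProd, Finset.prod_range_zero, pow_one, mul_one] at h2
      have h3 : 0 < 1 / q ^ 2 := by positivity
      rw [neg_div]
      constructor <;> linarith [abs_le.1 h2]
    · refine five_bounds_aux hq4 ((hP 3 hn).trans_lt ?_)
      simp only [sonineProd, Finset.prod_range_succ, Finset.prod_range_zero, e0]
      push_cast
      simp only [add_zero]
      rw [e1, e2, show (1 / q) ^ 1 * (1 * ((1 + 3 / 2) / (3 * (q - 1) / 2)) *
        ((1 + 3 / 2 + 1) / ((3 * q - 1) / 2)) * ((1 + 3 / 2 + 2) / ((3 * q + 1) / 2))) =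
        105 / (q * ((q - 1) * ((3 * q - 1) * (3 * q + 1)))) by
          generalize 3 * q - 1 = v at d2
          field_simp
          norm_num]
      rw [div_lt_div_iff₀ (by positivity) (by positivity), one_mul, sq]
      have : 105 * q < (q - 1) * ((3 * q - 1) * (3 * q + 1)) := by
        nlinarith [mul_nonneg (sub_nonneg.2 hq4) (sq_nonneg q)]
      nlinarith
  · refine five_bounds_aux hq4 ((hP 1 (by omega)).trans_lt ?_)
    rw [one_div_pow]
    refine mul_lt_of_lt_one_right (by positivity) ?_
    simp only [sonineProd, Finset.prod_range_succ, Finset.prod_range_zero, e0]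
    push_cast
    simp only [add_zero]
    rw [one_mul, div_lt_one (by positivity)]
    linarith
  · refine five_bounds_aux hq4 ((hP 0 (by omega)).trans_lt ?_)
    rw [sonineProd, Finset.prod_range_zero, mul_one, ← one_div_pow]
    exact pow_lt_pow_right_of_lt_one₀ hr0 (by linarith) (by omega)

/-- Here `l = m + 4`: five factors `(2l + 3) / 9` are outweighed by `4 ^ (l - 2)`. -/
lemma pow_five_lt (m : ℕ) : ((2 * ((m + 4 : ℕ) : ℝ) + 3) / 9) ^ 5 < 4 ^ (m + 2) := by
  induction m with
  | zero => norm_num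
  | succ m ih =>
    have hm : (0 : ℝ) ≤ m := m.cast_nonneg
    have h : (2 * ((m + 1 + 4 : ℕ) : ℝ) + 3) / 9 ≤ 13 / 11 * ((2 * ((m + 4 : ℕ) : ℝ) + 3) / 9) := by
      push_cast
      linarith
    calc ((2 * ((m + 1 + 4 : ℕ) : ℝ) + 3) / 9) ^ 5
        ≤ (13 / 11 * ((2 * ((m + 4 : ℕ) : ℝ) + 3) / 9)) ^ 5 :=
          pow_le_pow_left₀ (by positivity) h 5
      _ = (13 / 11) ^ 5 * ((2 * ((m + 4 : ℕ) : ℝ) + 3) / 9) ^ 5 := by rw [mul_pow]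
      _ ≤ 4 * ((2 * ((m + 4 : ℕ) : ℝ) + 3) / 9) ^ 5 := by
          refine mul_le_mul_of_nonneg_right (by norm_num) (by positivity)
      _ < 4 * 4 ^ (m + 2) := by linarith
      _ = _ := by ring

/-- If `l > α - 1/2`, the factors of Sonine's bound are at most `(2l + 3) / 9`, so that `r ^ l`
beats the product as long as there are at most five of them. -/
lemma five_bounds_big (N n l : ℕ) (hN : 5 ≤ N) (hl : 3 * N ≤ 2 * l + 8) :
    |kacKappa N n l| < 1 / ((N : ℝ) - 1) ^ 2 := by
  by_cases hn : 6 ≤ n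
  · rw [abs_kacKappa N n l (by omega), ← one_div_pow]
    exact abs_radial_lt_large N n l hN hl hn
  obtain ⟨m, rfl⟩ : ∃ m, l = m + 4 := ⟨l - 4, by omega⟩
  have hN' : (5 : ℝ) ≤ N := by exact_mod_cast hN
  refine (abs_kacKappa_le N n _ hN).trans_lt ?_
  obtain ⟨q, hq⟩ : ∃ q : ℝ, (N : ℝ) - 1 = q := ⟨_, rfl⟩
  have hq4 : 4 ≤ q := by linarith
  rw [hq]
  have hr : 1 / q ≤ 1 / 4 := one_div_le_one_div_of_le (by norm_num) hq4
  have hr0 : 0 < 1 / q := by positivity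
  have hP : sonineProd n (m + 4) ((3 * (N : ℝ) - 8) / 2) < 4 ^ (m + 2) := by
    have hm : (0 : ℝ) ≤ m := m.cast_nonneg
    have hb : 1 ≤ (2 * ((m + 4 : ℕ) : ℝ) + 3) / 9 := by push_cast; linarith
    refine lt_of_le_of_lt ?_ (pow_five_lt m)
    refine le_trans ?_ (pow_le_pow_right₀ hb (by omega : n ≤ 5))
    rw [sonineProd, ← Finset.card_range n, ← Finset.prod_const, Finset.card_range]
    refine Finset.prod_le_prod (fun i _ => ?_) (fun i _ => ?_)
    · exact div_nonneg (by positivity) (by linarith [(i.cast_nonneg : (0 : ℝ) ≤ i)])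
    · have hi : (0 : ℝ) ≤ i := i.cast_nonneg
      rw [div_le_div_iff₀ (by linarith) (by norm_num)]
      push_cast
      nlinarith
  calc (1 / q) ^ (m + 4) * sonineProd n (m + 4) ((3 * (N : ℝ) - 8) / 2)
      < (1 / q) ^ (m + 4) * 4 ^ (m + 2) := mul_lt_mul_of_pos_left hP (by positivity)
    _ = (1 / q) ^ 2 * (1 / q * 4) ^ (m + 2) := by rw [mul_pow]; ring
    _ ≤ (1 / q) ^ 2 * 1 := by
        refine mul_le_mul_of_nonneg_left (pow_le_one₀ (by positivity) ?_) (by positivity)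
        linarith
    _ = 1 / q ^ 2 := by rw [mul_one, one_div_pow]

lemma five_bounds (N n l : ℕ) (hN : 5 ≤ N) (h : 2 < n + l) :
    -1 / ((N : ℝ) - 1) ≤ kacKappa N n l ∧ kacKappa N n l < 1 / ((N : ℝ) - 1) ^ 2 := by
  have hN' : (5 : ℝ) ≤ N := by exact_mod_cast hN
  by_cases hl : 2 * l + 9 ≤ 3 * N
  · exact five_bounds_small N n l hN h hl
  · exact five_bounds_aux (by linarith) (five_bounds_big N n l hN (by omega))

/-- **Theorem 8.1.** Bounds on the eigenvalues `κ_{n,ℓ}(N)` of the correlation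
operator: (a) for `N ≥ 5` and `n + ℓ > 2`,
`-1/(N-1) ≤ κ_{n,ℓ}(N) < κ_{0,2}(N) = 1/(N-1)²`; (b) for `N = 4` and
`n + ℓ > 2`, `-1/3 ≤ κ_{n,ℓ}(4) < κ_{2,0}(4) = 23/243`; (c) for `N = 3` and
`n + ℓ > 0` with `(n,ℓ) ≠ (1,1)`, `-1/2 ≤ κ_{n,ℓ}(3) ≤ κ_{2,2}(3) = 13/40`. -/
theorem kappa_bounds :
    (∀ N n ℓ : ℕ, 5 ≤ N → 2 < n + ℓ →
      kacKappa N 0 2 = 1 / ((N : ℝ) - 1) ^ 2 ∧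
      -1 / ((N : ℝ) - 1) ≤ kacKappa N n ℓ ∧
      kacKappa N n ℓ < 1 / ((N : ℝ) - 1) ^ 2) ∧
    (∀ n ℓ : ℕ, 2 < n + ℓ →
      kacKappa 4 2 0 = 23 / 243 ∧
      -1 / 3 ≤ kacKappa 4 n ℓ ∧ kacKappa 4 n ℓ < 23 / 243) ∧
    (∀ n ℓ : ℕ, 0 < n + ℓ → ¬(n = 1 ∧ ℓ = 1) →
      kacKappa 3 2 2 = 13 / 40 ∧
      -1 / 2 ≤ kacKappa 3 n ℓ ∧ kacKappa 3 n ℓ ≤ 13 / 40) := by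
  exact ⟨fun N n l hN h => ⟨kacKappa_zero_two N hN, five_bounds N n l hN h⟩,
    fun n l h => ⟨kacKappa_four_two_zero, four_bounds n l h⟩,
    fun n l h h11 => ⟨kacKappa_three_two_two, three_bounds n l h h11⟩⟩
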